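/- arXiv:2005.05609 — 3 statements merged into one kernel-verified Lean document; each statement's English description precedes it below -/
import Mathlib

section
/- Let x₁, x₂ ∈ L¹([a,b],ℝⁿ). If ∫_a^b ( x₁(s)·η(s) + x₂(s)·η'(s) ) ds = 0 for every infinitely differentiable function η : [a,b] → ℝⁿ whose support is a compact subset of the open interval (a,b), then there exists a constant y ∈ ℝⁿ such that x₂(t) = y + ∫_a^t x₁(s) ds for almost every t ∈ [a,b]; in particular x₂ has an absolutely continuous representative whose derivative equals x₁ almost everywhere on [a,b]. -/
open MeasureTheory Set
open scoped RealInnerProductSpace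

lemma aux_prim {a b : ℝ} (hab : a < b) {g : ℝ → ℝ} (hg : ContDiff ℝ (⊤ : ℕ∞) g)
    (hs : tsupport g ⊆ Ioo a b) (h0 : ∫ s in a..b, g s = 0) :
    ∃ φ : ℝ → ℝ, ContDiff ℝ (⊤ : ℕ∞) φ ∧ tsupport φ ⊆ Ioo a b ∧ deriv φ = g := by
  have hc : Continuous g := hg.continuous
  have hd : ∀ t, HasDerivAt (fun t => ∫ s in a..t, g s) (g t) t := fun t =>
    intervalIntegral.integral_hasDerivAt_right (hc.intervalIntegrable _ _)
      (hc.stronglyMeasurableAtFilter _ _) hc.continuousAt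
  have hderiv : deriv (fun t => ∫ s in a..t, g s) = g := funext fun t => (hd t).deriv
  refine ⟨fun t => ∫ s in a..t, g s, ?_, ?_, hderiv⟩
  · refine contDiff_infty_iff_deriv.2 ⟨fun t => (hd t).differentiableAt, ?_⟩
    rw [hderiv]; exact hg
  · have hK : IsCompact (tsupport g) :=
      isCompact_Icc.of_isClosed_subset (isClosed_tsupport g) (hs.trans Ioo_subset_Icc_self)
    have hcd : ∃ c d, a < c ∧ d < b ∧ tsupport g ⊆ Icc c d := by
      rcases (tsupport g).eq_empty_or_nonempty with he | hne
      · exact ⟨a + 1, b - 1, by linarith, by linarith, by simp [he]⟩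
      · obtain ⟨c, hc1, hc2⟩ := hK.exists_isLeast hne
        obtain ⟨d, hd1, hd2⟩ := hK.exists_isGreatest hne
        exact ⟨c, d, (hs hc1).1, (hs hd1).2, fun x hx => ⟨hc2 hx, hd2 hx⟩⟩
    obtain ⟨c, d, hac, hdb, hsub⟩ := hcd
    have hz : ∀ s, s ∉ Icc c d → g s = 0 := fun s hs' =>
      image_eq_zero_of_notMem_tsupport fun h => hs' (hsub h)
    refine (closure_minimal (t := Icc c d) ?_ isClosed_Icc).trans
      fun x hx => ⟨hac.trans_le hx.1, hx.2.trans_lt hdb⟩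
    intro t ht
    by_contra hn
    apply ht
    by_cases htc : t < c
    · change ∫ s in a..t, g s = 0
      rw [intervalIntegral.integral_congr (g := fun _ => (0 : ℝ))]
      · simp
      · intro s hs'
        refine hz s fun h => ?_
        have : s ≤ max a t := hs'.2
        have := max_lt hac htc
        linarith [h.1]
    · have htd : d < t := by
        by_contra h'
        exact hn ⟨not_lt.1 htc, not_lt.1 h'⟩
      change ∫ s in a..t, g s = 0
      rw [← intervalIntegral.integral_add_adjacent_intervals (b := b)
        (hc.intervalIntegrable _ _) (hc.intervalIntegrable _ _), h0, zero_add]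
      rw [intervalIntegral.integral_congr (g := fun _ => (0 : ℝ))]
      · simp
      · intro s hs'
        refine hz s fun h => ?_
        have : min b t ≤ s := hs'.1
        have := lt_min hdb htd
        linarith [h.2]

lemma aux_const {a b : ℝ} (hab : a < b) {w : ℝ → ℝ} (hw : IntegrableOn w (Icc a b))
    (h : ∀ φ : ℝ → ℝ, ContDiff ℝ (⊤ : ℕ∞) φ → tsupport φ ⊆ Ioo a b →
      ∫ s in a..b, w s * deriv φ s = 0) :
    ∃ c : ℝ, ∀ᵐ t, t ∈ Ioo a b → w t = c := by
  have hwi : IntervalIntegrable w volume a b :=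
    (intervalIntegrable_iff_integrableOn_Icc_of_le hab.le).2 hw
  obtain ⟨ψ, hψ, hψs, hψ1⟩ : ∃ ψ : ℝ → ℝ, ContDiff ℝ (⊤ : ℕ∞) ψ ∧ tsupport ψ ⊆ Ioo a b ∧
      ∫ s in a..b, ψ s = 1 := by
    let f : ContDiffBump ((a + b) / 2) :=
      ⟨(b - a) / 8, (b - a) / 4, by linarith, by linarith⟩
    have hsup : tsupport (f.normed volume) ⊆ Ioo a b := by
      rw [f.tsupport_normed_eq, Real.closedBall_eq_Icc]
      intro x hx
      have h1 : (a + b) / 2 - (b - a) / 4 ≤ x := hx.1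
      have h2 : x ≤ (a + b) / 2 + (b - a) / 4 := hx.2
      constructor <;> linarith
    refine ⟨f.normed volume, f.contDiff_normed, hsup, ?_⟩
    rw [intervalIntegral.integral_eq_integral_of_support_subset, f.integral_normed]
    exact (subset_tsupport _).trans (hsup.trans Ioo_subset_Ioc_self)
  refine ⟨∫ s in a..b, w s * ψ s, ?_⟩
  set c := ∫ s in a..b, w s * ψ s with hcdef
  have key := isOpen_Ioo.ae_eq_zero_of_integral_contDiff_smul_eq_zero (U := Ioo a b)
    (μ := (volume : Measure ℝ)) (f := fun t => w t - c) ?_ ?_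
  · filter_upwards [key] with t ht hm
    exact sub_eq_zero.1 (ht hm)
  · have : IntegrableOn (fun t => w t - c) (Icc a b) :=
      hw.sub (integrableOn_const (by simp))
    exact (this.mono_set Ioo_subset_Icc_self).locallyIntegrableOn
  · intro g hg _ hgs
    set m := ∫ s in a..b, g s with hm
    have hψc := hψ.continuous
    have hgc := hg.continuous
    obtain ⟨φ, h1, h2, h3⟩ := aux_prim hab (g := fun s => g s - m * ψ s)
      (hg.sub (contDiff_const.mul hψ))
      (by
        refine (closure_minimal (t := tsupport g ∪ tsupport ψ) ?_
          ((isClosed_tsupport g).union (isClosed_tsupport ψ))).trans (union_subset hgs hψs)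
        intro x hx
        by_contra hn
        rw [mem_union, not_or] at hn
        apply hx
        simp [image_eq_zero_of_notMem_tsupport hn.1, image_eq_zero_of_notMem_tsupport hn.2])
      (by
        rw [intervalIntegral.integral_sub (hgc.intervalIntegrable _ _)
          ((hψc.intervalIntegrable _ _).const_mul m),
          intervalIntegral.integral_const_mul, hψ1, ← hm]
        ring)
    have h4 := h φ h1 h2
    rw [h3] at h4
    have hwg : IntervalIntegrable (fun s => w s * g s) volume a b :=
      hwi.mul_continuousOn hgc.continuousOn
    have hwψ : IntervalIntegrable (fun s => w s * ψ s) volume a b :=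
      hwi.mul_continuousOn hψc.continuousOn
    have h5 : ∫ s in a..b, w s * (g s - m * ψ s) = (∫ s in a..b, w s * g s) - m * c := by
      rw [hcdef, ← intervalIntegral.integral_const_mul, ← intervalIntegral.integral_sub hwg
        (hwψ.const_mul m)]
      congr 1; ext s; ring
    have h6 : ∫ s in a..b, g s • (w s - c) = (∫ s in a..b, w s * g s) - c * m := by
      rw [hm, ← intervalIntegral.integral_const_mul, ← intervalIntegral.integral_sub hwg
        ((hgc.intervalIntegrable _ _).const_mul c)]
      congr 1; ext s; simp only [smul_eq_mul]; ring
    rw [← intervalIntegral.integral_eq_integral_of_support_subset (a := a) (b := b), h6]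
    · linarith
    · refine Subset.trans ?_ ((subset_tsupport g).trans (hgs.trans Ioo_subset_Ioc_self))
      intro x hx hx0
      apply hx
      simp [hx0]

lemma aux_scalar {a b : ℝ} (hab : a < b) {f₁ f₂ : ℝ → ℝ}
    (h₁ : IntegrableOn f₁ (Icc a b)) (h₂ : IntegrableOn f₂ (Icc a b))
    (h : ∀ φ : ℝ → ℝ, ContDiff ℝ (⊤ : ℕ∞) φ → tsupport φ ⊆ Ioo a b →
      ∫ s in a..b, (f₁ s * φ s + f₂ s * deriv φ s) = 0) :
    ∃ c : ℝ, ∀ᵐ t, t ∈ Ioo a b → f₂ t = c + ∫ s in a..t, f₁ s := by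
  have h₁i : IntervalIntegrable f₁ volume a b :=
    (intervalIntegrable_iff_integrableOn_Icc_of_le hab.le).2 h₁
  have h₂i : IntervalIntegrable f₂ volume a b :=
    (intervalIntegrable_iff_integrableOn_Icc_of_le hab.le).2 h₂
  have hac := h₁i.absolutelyContinuousOnInterval_intervalIntegral (c := a) left_mem_uIcc
  set F : ℝ → ℝ := fun t => ∫ s in a..t, f₁ s with hF
  have hFc : ContinuousOn F (Icc a b) := by
    have := hac.continuousOn
    rwa [uIcc_of_le hab.le] at this
  obtain ⟨c, hc⟩ := aux_const hab (w := fun t => f₂ t - F t)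
    (h₂.sub (hFc.integrableOn_Icc)) (by
      intro φ hφ hs
      have hφac : AbsolutelyContinuousOnInterval φ a b :=
        ContDiffOn.absolutelyContinuousOnInterval
          (hφ.of_le (by exact_mod_cast le_top)).contDiffOn
      have hφa : φ a = 0 := image_eq_zero_of_notMem_tsupport fun h => lt_irrefl _ (hs h).1
      have hφb : φ b = 0 := image_eq_zero_of_notMem_tsupport fun h => lt_irrefl _ (hs h).2
      have hφd : Continuous (deriv φ) := hφ.continuous_deriv (by exact_mod_cast le_top)
      have e1 := hac.integral_mul_deriv_eq_deriv_mul hφac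
      have e2 : ∫ x in a..b, deriv F x * φ x = ∫ x in a..b, f₁ x * φ x := by
        apply intervalIntegral.integral_congr_ae
        filter_upwards [h₁i.ae_hasDerivAt_integral] with x hx hm
        rw [(hx (uIoc_subset_uIcc hm) a left_mem_uIcc).deriv]
      rw [e2, hφa, hφb] at e1
      have i1 : IntervalIntegrable (fun s => f₁ s * φ s) volume a b :=
        h₁i.mul_continuousOn hφ.continuous.continuousOn
      have i2 : IntervalIntegrable (fun s => f₂ s * deriv φ s) volume a b :=
        h₂i.mul_continuousOn hφd.continuousOn
      have i3 : IntervalIntegrable (fun s => F s * deriv φ s) volume a b :=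
        (hac.continuousOn.mul hφd.continuousOn).intervalIntegrable
      have e3 := h φ hφ hs
      rw [intervalIntegral.integral_add i1 i2] at e3
      simp only [sub_mul]
      rw [intervalIntegral.integral_sub i2 i3]
      linarith)
  refine ⟨c, ?_⟩
  filter_upwards [hc] with t ht hm
  have := ht hm
  linarith

theorem stmt_1 (n : ℕ) (hn : 1 ≤ n) (a b : ℝ) (hab : a < b)
    (x₁ x₂ : ℝ → EuclideanSpace ℝ (Fin n))
    (h₁ : IntegrableOn x₁ (Icc a b)) (h₂ : IntegrableOn x₂ (Icc a b))
    (h : ∀ η : ℝ → EuclideanSpace ℝ (Fin n), ContDiff ℝ (⊤ : ℕ∞) η → tsupport η ⊆ Ioo a b →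
      (∫ s in a..b, (⟪x₁ s, η s⟫ + ⟪x₂ s, deriv η s⟫)) = 0) :
    ∃ y : EuclideanSpace ℝ (Fin n), ∀ᵐ t ∂(volume.restrict (Icc a b)),
      x₂ t = y + ∫ s in a..t, x₁ s := by
  have hco : ∀ i : Fin n, ∃ c : ℝ, ∀ᵐ t, t ∈ Ioo a b →
      x₂ t i = c + ∫ s in a..t, x₁ s i := by
    intro i
    refine aux_scalar hab (f₁ := fun s => x₁ s i) (f₂ := fun s => x₂ s i)
      ((EuclideanSpace.proj i : EuclideanSpace ℝ (Fin n) →L[ℝ] ℝ).integrable_comp h₁)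
      ((EuclideanSpace.proj i : EuclideanSpace ℝ (Fin n) →L[ℝ] ℝ).integrable_comp h₂) ?_
    intro φ hφ hs
    have := h (fun s => φ s • EuclideanSpace.single i (1 : ℝ)) (hφ.smul contDiff_const)
      ((tsupport_smul_subset_left φ _).trans hs)
    rw [← this]
    congr 1
    ext s
    have hd : deriv (fun s => φ s • EuclideanSpace.single i (1 : ℝ)) s
        = deriv φ s • EuclideanSpace.single i (1 : ℝ) :=
      deriv_smul_const (hφ.differentiable (by simp)).differentiableAt _
    rw [hd, inner_smul_right, inner_smul_right]
    simp [EuclideanSpace.inner_single_right, mul_comm]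
  choose c hc using hco
  refine ⟨WithLp.toLp 2 c, ?_⟩
  rw [← restrict_Ioo_eq_restrict_Icc, ae_restrict_iff' measurableSet_Ioo]
  filter_upwards [ae_all_iff.2 hc] with t ht hm
  ext i
  have hi : IntervalIntegrable x₁ volume a t := by
    rw [intervalIntegrable_iff_integrableOn_Icc_of_le hm.1.le]
    exact h₁.mono_set (Icc_subset_Icc_right hm.2.le)
  have e := (EuclideanSpace.proj i : EuclideanSpace ℝ (Fin n) →L[ℝ] ℝ).intervalIntegral_comp_comm hi
  simp only [EuclideanSpace.coe_proj] at e
  rw [ht i hm, PiLp.add_apply, ← e]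
end

section
/- Let 0 < α ≤ 1 and β > 0. Let A, B, C ∈ ℝ^{n×n} be matrices and let P, Q, R ∈ L^∞([a,b],ℝ^{n×n}) be essentially bounded matrix-valued functions. Suppose that for every ν ∈ L^∞([a,b],ℝⁿ) and every w ∈ ℝⁿ, setting η(t) := w + ∫_a^t ((t−s)^{α−1}/Γ(α)) ν(s) ds, one has η(a)ᵀ A η(a) + 2 η(a)ᵀ B η(b) + η(b)ᵀ C η(b) + ∫_a^b ((b−s)^{β−1}/Γ(β)) [ η(s)ᵀ P(s) η(s) + 2 η(s)ᵀ Q(s) ν(s) + ν(s)ᵀ R(s) ν(s) ] ds ≥ 0. Then for almost every t ∈ [a,b], the matrix ((b−t)^{β−1}/Γ(β)) R(t) is positive semidefinite, i.e. vᵀ ((b−t)^{β−1}/Γ(β)) R(t) v ≥ 0 for all v ∈ ℝⁿ. -/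
open MeasureTheory Set

/-- The quadratic/bilinear form `vᵀ M w` associated with a real `n × n` matrix. -/
def quadF {n : ℕ} (M : Matrix (Fin n) (Fin n) ℝ) (v w : EuclideanSpace ℝ (Fin n)) : ℝ :=
  ∑ i, ∑ j, v i * M i j * w j

lemma scal (α h x : ℝ) (h0 : 0 < α) (h1 : α ≤ 1) (hh : 0 < h) (hx : 0 < x) :
    0 ≤ x^α - (max 0 (x-h))^α ∧ x^α - (max 0 (x-h))^α ≤ h * x^(α-1) ∧
    x^α - (max 0 (x-h))^α ≤ h^α := by
  have e1 : x^α = x * x^(α-1) := by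
    rw [Real.rpow_sub_one hx.ne']; field_simp
  have e2 : h^α = h * h^(α-1) := by
    rw [Real.rpow_sub_one hh.ne']; field_simp
  have hxp : 0 < x^(α-1) := Real.rpow_pos_of_pos hx _
  have hm : (max 0 (x-h))^α ≤ x^α :=
    Real.rpow_le_rpow (le_max_left _ _) (max_le hx.le (by linarith)) h0.le
  refine ⟨by linarith, ?_⟩
  rcases le_total x h with hxh | hxh
  · rw [max_eq_left (by linarith), Real.zero_rpow h0.ne', sub_zero]
    refine ⟨?_, Real.rpow_le_rpow hx.le hxh h0.le⟩
    rw [e1]; gcongr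
  · rw [max_eq_right (by linarith)]
    have key : x^α - (x-h)^α ≤ h * x^(α-1) := by
      have : (x-h) * x^(α-1) ≤ (x-h)^α := by
        rcases hxh.eq_or_lt with rfl | hlt
        · simp [Real.zero_rpow h0.ne']
        · have e3 : (x-h)^α = (x-h) * (x-h)^(α-1) := by
            rw [Real.rpow_sub_one (by linarith)]; field_simp [show x - h ≠ 0 by linarith]
          rw [e3]
          have := Real.rpow_le_rpow_of_nonpos (show 0 < x - h by linarith) (show x - h ≤ x by linarith) (show α - 1 ≤ 0 by linarith)
          have h4 : 0 < x - h := by linarith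
          gcongr
      rw [e1]; linarith
    refine ⟨key, key.trans ?_⟩
    rw [e2]
    have := Real.rpow_le_rpow_of_nonpos hh hxh (show α - 1 ≤ 0 by linarith)
    gcongr

lemma kernel_int (α t u w : ℝ) (h0 : 0 < α) :
    IntervalIntegrable (fun s => (t - s)^(α-1)) volume u w := by
  have := (intervalIntegral.intervalIntegrable_rpow' (a := t - u) (b := t - w) (r := α - 1) (by linarith))
  have := this.comp_sub_left t
  simpa using this

lemma kernel_int' (α t u w : ℝ) (h0 : 0 < α) :
    IntervalIntegrable (fun s => (s - t)^(α-1)) volume u w := by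
  have := (intervalIntegral.intervalIntegrable_rpow' (a := u - t) (b := w - t) (r := α - 1) (by linarith))
  have := this.comp_sub_right t
  simpa using this

lemma kernel_val (α t u w : ℝ) (h0 : 0 < α) :
    ∫ s in u..w, (t - s)^(α-1) = ((t-u)^α - (t-w)^α)/α := by
  rw [intervalIntegral.integral_comp_sub_left (fun x => x^(α-1)) t, integral_rpow (Or.inl (by linarith))]
  simp

lemma eta_val {n : ℕ} (α a t0 h t : ℝ) (v : EuclideanSpace ℝ (Fin n)) (h0 : 0 < α) (hh : 0 < h)
    (hat : a ≤ t0) (ht : a ≤ t) :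
    ∫ s in a..t, ((t - s) ^ (α - 1) / Real.Gamma α) • (indicator (Ioc t0 (t0+h)) (fun _ => v)) s
     = (((max 0 (t-t0))^α - (max 0 (t-t0-h))^α)/(α*Real.Gamma α)) • v := by
  have e : ∀ s, ((t - s) ^ (α - 1) / Real.Gamma α) • (indicator (Ioc t0 (t0+h)) (fun _ => v)) s
     = indicator (Ioc t0 (t0+h)) (fun s => ((t - s) ^ (α - 1) / Real.Gamma α) • v) s := by
    intro s; by_cases hs : s ∈ Ioc t0 (t0+h) <;> simp [hs]
  simp_rw [e]
  rw [intervalIntegral.integral_of_le ht, setIntegral_indicator measurableSet_Ioc, Ioc_inter_Ioc,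
    max_eq_right hat]
  rcases le_total t t0 with h1 | h1
  · rw [Ioc_eq_empty (by simp [h1]), max_eq_left (by linarith), max_eq_left (by linarith)]
    simp
  · rw [← intervalIntegral.integral_of_le (le_min h1 (by linarith)),
      intervalIntegral.integral_smul_const, intervalIntegral.integral_div, kernel_val _ _ _ _ h0,
      max_eq_right (by linarith), div_div]
    have : t - min t (t0+h) = max 0 (t - t0 - h) := by
      rcases le_total t (t0+h) with h2 | h2
      · rw [min_eq_left h2, max_eq_left (by linarith)]; ring
      · rw [min_eq_right h2, max_eq_right (by linarith)]; ring
    rw [this]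

lemma g_int (α β t0 b : ℝ) (hα : 0 < α) (hβ : 0 < β) (h : t0 < b) :
    IntervalIntegrable (fun s => (b - s)^(β-1) * (s-t0)^(α-1)) volume t0 b := by
  have hc1 : t0 < (t0+b)/2 := by linarith
  have hc2 : (t0+b)/2 < b := by linarith
  refine IntervalIntegrable.trans (b := (t0+b)/2) ?_ ?_
  · refine (kernel_int' α t0 _ _ hα).continuousOn_mul ?_
    rw [uIcc_of_le hc1.le]
    intro s hs
    have : b - s ≠ 0 := by linarith [hs.2]
    exact ((continuousAt_const.sub continuousAt_id).rpow_const (Or.inl this)).continuousWithinAt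
  · refine (kernel_int β b _ _ hβ).mul_continuousOn ?_
    rw [uIcc_of_le hc2.le]
    intro s hs
    have : s - t0 ≠ 0 := by linarith [hs.1]
    exact ((continuousAt_id.sub continuousAt_const).rpow_const (Or.inl this)).continuousWithinAt

noncomputable def phi (α t0 h t : ℝ) : ℝ :=
  ((max 0 (t-t0))^α - (max 0 (t-t0-h))^α)/(α*Real.Gamma α)

lemma phi_meas (α t0 h : ℝ) : Measurable (phi α t0 h) := by
  unfold phi; fun_prop

lemma phi_zero (α t0 h t : ℝ) (hh : 0 < h) (ht : t ≤ t0) : phi α t0 h t = 0 := by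
  unfold phi
  rw [max_eq_left (by linarith), max_eq_left (by linarith)]; simp

lemma phi_bd (α t0 h t : ℝ) (h0 : 0 < α) (h1 : α ≤ 1) (hh : 0 < h) (ht : t0 < t) :
    0 ≤ phi α t0 h t ∧ phi α t0 h t ≤ (α*Real.Gamma α)⁻¹ * h^α ∧
    phi α t0 h t ^ 2 ≤ (α*Real.Gamma α)⁻¹^2 * (h^α * h) * (t-t0)^(α-1) := by
  have hG := Real.Gamma_pos_of_pos h0
  have hx : 0 < t - t0 := by linarith
  obtain ⟨a1, a2, a3⟩ := scal α h (t-t0) h0 h1 hh hx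
  unfold phi
  rw [max_eq_right hx.le, div_eq_inv_mul]
  set d := (t-t0)^α - (max 0 (t-t0-h))^α
  have hc : 0 < (α*Real.Gamma α)⁻¹ := by positivity
  refine ⟨by positivity, by gcongr, ?_⟩
  have : d^2 ≤ h^α * (h * (t-t0)^(α-1)) := by
    rw [sq]; exact mul_le_mul a3 a2 a1 (by positivity)
  rw [mul_pow]
  calc _ ≤ (α*Real.Gamma α)⁻¹^2 * (h^α * (h * (t-t0)^(α-1))) := by gcongr
    _ = _ := by ring

lemma needle (α β a b t0 h M C0 : ℝ) (h0 : 0 < α) (h1 : α ≤ 1) (hβ : 0 < β) (hh : 0 < h)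
    (hat : a < t0) (htb : t0 + h ≤ b) (p q r : ℝ → ℝ) (hp : Measurable p) (hq : Measurable q)
    (hr : Measurable r)
    (hpb : ∀ᵐ s, s ∈ Icc a b → |p s| ≤ M) (hqb : ∀ᵐ s, s ∈ Icc a b → |q s| ≤ M)
    (hrb : ∀ᵐ s, s ∈ Icc a b → |r s| ≤ M)
    (hF : 0 ≤ phi α t0 h b ^ 2 * C0 + ∫ s in a..b, ((b - s) ^ (β - 1) / Real.Gamma β) *
       (phi α t0 h s ^ 2 * p s + 2 * (phi α t0 h s * indicator (Ioc t0 (t0+h)) 1 s * q s)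
         + indicator (Ioc t0 (t0+h)) 1 s * r s)) :
    0 ≤ (h^α * h) * ((α*Real.Gamma α)⁻¹^2 * ((b-t0)^(α-1) * |C0| + M * (Real.Gamma β)⁻¹ *
        ∫ s in t0..b, (b - s)^(β-1) * (s-t0)^(α-1)))
      + 2 * M * (α*Real.Gamma α)⁻¹ * h^α * (∫ s in t0..(t0+h), (b - s) ^ (β - 1) / Real.Gamma β)
      + ∫ s in t0..(t0+h), (b - s) ^ (β - 1) / Real.Gamma β * r s := by
  have hGb := Real.Gamma_pos_of_pos hβ
  have hG := Real.Gamma_pos_of_pos h0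
  have htb' : t0 < b := by linarith
  set c := (α*Real.Gamma α)⁻¹ with hcdef
  have hc : 0 < c := by positivity
  set k : ℝ → ℝ := fun s => (b - s) ^ (β - 1) / Real.Gamma β with hk
  set E := Ioc t0 (t0+h) with hE
  have hkm : Measurable k := by fun_prop
  have hkint : ∀ u w, IntervalIntegrable k volume u w := fun u w =>
    (kernel_int β b u w hβ).div_const _
  have hM : 0 ≤ M := by
    have : ∃ s, s ∈ Icc a b ∧ |p s| ≤ M := by
      have h3 : (volume : Measure ℝ) (Ioo a b) ≠ 0 := by simp; linarith
      have h4 : ∃ᵐ s, s ∈ Ioo a b := frequently_ae_mem_iff.2 h3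
      obtain ⟨s, hs, hs'⟩ := (h4.and_eventually hpb).exists
      exact ⟨s, Ioo_subset_Icc_self hs, hs' (Ioo_subset_Icc_self hs)⟩
    obtain ⟨s, -, hs⟩ := this
    exact (abs_nonneg _).trans hs
  set F : ℝ → ℝ := fun s => k s *
       (phi α t0 h s ^ 2 * p s + 2 * (phi α t0 h s * indicator E 1 s * q s)
         + indicator E 1 s * r s) with hFdef
  have hind : Measurable (indicator E (1 : ℝ → ℝ)) := measurable_one.indicator measurableSet_Ioc
  have hFm : Measurable F := by
    have := phi_meas α t0 h
    fun_prop
  set V : ℝ → ℝ := fun s => (M * c^2 * (h^α*h) * (Real.Gamma β)⁻¹) * ((b - s)^(β-1) * (s-t0)^(α-1))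
     + (2 * M * c * h^α) * (indicator E k s) with hV
  have gint : IntegrableOn (fun s => (b - s)^(β-1) * (s-t0)^(α-1)) (Ioc t0 b) :=
    (g_int α β t0 b h0 hβ htb').1
  have kE : IntegrableOn (indicator E k) (Ioc t0 b) :=
    ((hkint t0 b).1).indicator measurableSet_Ioc
  have Vint : IntegrableOn V (Ioc t0 b) := (gint.const_mul _).add (kE.const_mul _)
  have ae3 : ∀ᵐ s ∂(volume.restrict (Ioc t0 b)), s ∈ Ioc t0 b ∧ |p s| ≤ M ∧ |q s| ≤ M ∧ |r s| ≤ M := by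
    rw [ae_restrict_iff' measurableSet_Ioc]
    filter_upwards [hpb, hqb, hrb] with s e1 e2 e3 hs
    have : s ∈ Icc a b := ⟨by linarith [hs.1], hs.2⟩
    exact ⟨hs, e1 this, e2 this, e3 this⟩
  have rE : IntegrableOn (indicator E (fun s => k s * r s)) (Ioc t0 b) := by
    refine Integrable.mono' (kE.const_mul M) (((hkm.mul hr).indicator measurableSet_Ioc).aestronglyMeasurable) ?_
    filter_upwards [ae3] with s hs
    have hks : 0 ≤ k s := div_nonneg (Real.rpow_nonneg (by linarith [hs.1.2]) _) hGb.le
    by_cases hsE : s ∈ E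
    · simp only [hsE, indicator_of_mem, Real.norm_eq_abs, abs_mul, abs_of_nonneg hks]
      nlinarith [hs.2.2.2]
    · simp [hsE]
  have key : ∀ᵐ s ∂(volume.restrict (Ioc t0 b)), |F s - indicator E (fun s => k s * r s) s| ≤ V s := by
    filter_upwards [ae3] with s ⟨hs, e1, e2, e3⟩
    have hks : 0 ≤ k s := div_nonneg (Real.rpow_nonneg (by linarith [hs.2]) _) hGb.le
    obtain ⟨f1, f2, f3⟩ := phi_bd α t0 h s h0 h1 hh hs.1
    have t1 : |k s * (phi α t0 h s ^ 2 * p s)| ≤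
        (M * c^2 * (h^α*h) * (Real.Gamma β)⁻¹) * ((b - s)^(β-1) * (s-t0)^(α-1)) := by
      rw [abs_mul, abs_mul, abs_of_nonneg hks, abs_of_nonneg (sq_nonneg _)]
      calc _ ≤ k s * ((c^2 * (h^α * h) * (s-t0)^(α-1)) * M) := by
            have : 0 ≤ (s - t0)^(α-1) := Real.rpow_nonneg (by linarith [hs.1]) _
            gcongr
        _ = _ := by simp only [hk]; ring
    have t2 : |k s * (2 * (phi α t0 h s * indicator E 1 s * q s))| ≤ (2 * M * c * h^α) * (indicator E k s) := by
      by_cases hsE : s ∈ E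
      · simp only [hsE, indicator_of_mem, abs_mul, abs_of_nonneg hks, abs_of_nonneg f1, Pi.one_apply, mul_one, abs_two]
        calc _ ≤ k s * (2 * ((c * h^α) * M)) := by gcongr
          _ = _ := by ring
      · simp [hsE]
    have : F s - indicator E (fun s => k s * r s) s =
       k s * (phi α t0 h s ^ 2 * p s) + k s * (2 * (phi α t0 h s * indicator E 1 s * q s)) := by
      by_cases hsE : s ∈ E <;> simp [hsE, hFdef] <;> ring
    rw [this]
    exact (abs_add_le _ _).trans (add_le_add t1 t2)
  have dint : IntegrableOn (fun s => F s - indicator E (fun s => k s * r s) s) (Ioc t0 b) :=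
    Integrable.mono' Vint ((hFm.sub ((hkm.mul hr).indicator measurableSet_Ioc)).aestronglyMeasurable) key
  have Fint : IntegrableOn F (Ioc t0 b) := by
    refine (dint.add rE).congr (ae_of_all _ fun s => ?_)
    simp
  have hle : ∫ s in Ioc t0 b, F s ≤ ∫ s in Ioc t0 b, (V s + indicator E (fun s => k s * r s) s) := by
    refine integral_mono_ae Fint (Vint.add rE) ?_
    filter_upwards [key] with s hs
    have := (abs_le.1 hs).2
    linarith
  have hEi : ∀ f : ℝ → ℝ, ∫ s in Ioc t0 b, indicator E f s = ∫ s in t0..(t0+h), f s := by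
    intro f
    rw [setIntegral_indicator measurableSet_Ioc, intervalIntegral.integral_of_le (by linarith), Ioc_inter_Ioc,
      max_self, min_eq_right htb]
  rw [integral_add Vint rE, integral_add (gint.const_mul _) (kE.const_mul _), integral_const_mul,
    integral_const_mul, hEi, hEi] at hle
  have hFeq : ∫ s in a..b, F s = ∫ s in Ioc t0 b, F s := by
    rw [intervalIntegral.integral_of_le (by linarith)]
    refine setIntegral_eq_of_subset_of_forall_sdiff_eq_zero measurableSet_Ioc (Ioc_subset_Ioc_left hat.le) ?_
    intro s hs
    have hst : s ≤ t0 := by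
      by_contra hcon
      exact hs.2 ⟨not_le.1 hcon, hs.1.2⟩
    have hsE : s ∉ E := fun hx => not_lt.2 hst hx.1
    simp [hFdef, phi_zero α t0 h s hh hst, hsE]
  have hb := (phi_bd α t0 h b h0 h1 hh htb').2.2
  have hC : phi α t0 h b ^ 2 * C0 ≤ (c^2 * (h^α * h) * (b-t0)^(α-1)) * |C0| :=
    (mul_le_mul_of_nonneg_left (le_abs_self _) (sq_nonneg _)).trans
      (mul_le_mul_of_nonneg_right hb (abs_nonneg _))
  change 0 ≤ phi α t0 h b ^ 2 * C0 + ∫ s in a..b, F s at hF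
  rw [hFeq] at hF
  have := hF.trans (add_le_add hC hle)
  rw [intervalIntegral.integral_of_le htb'.le]
  refine this.trans (le_of_eq ?_)
  ring

lemma quadF_smul {n : ℕ} (M : Matrix (Fin n) (Fin n) ℝ) (v : EuclideanSpace ℝ (Fin n)) (x y : ℝ) :
    quadF M (x • v) (y • v) = x * y * quadF M v v := by
  simp only [quadF, Finset.mul_sum, PiLp.smul_apply, smul_eq_mul]
  refine Finset.sum_congr rfl fun i _ => Finset.sum_congr rfl fun j _ => by ring

lemma quadF_bd {n : ℕ} (M : Matrix (Fin n) (Fin n) ℝ) (v : EuclideanSpace ℝ (Fin n)) (c : ℝ)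
    (hc : ∀ i j, |M i j| ≤ c) : |quadF M v v| ≤ |c| * ∑ i, ∑ j, |v i| * |v j| := by
  simp only [quadF, Finset.mul_sum]
  refine (Finset.abs_sum_le_sum_abs _ _).trans (Finset.sum_le_sum fun i _ => ?_)
  refine (Finset.abs_sum_le_sum_abs _ _).trans (Finset.sum_le_sum fun j _ => ?_)
  rw [abs_mul, abs_mul]
  have := (hc i j).trans (le_abs_self c)
  calc _ ≤ |v i| * |c| * |v j| := by gcongr
    _ = _ := by ring

lemma quadF_meas {n : ℕ} (P : ℝ → Matrix (Fin n) (Fin n) ℝ) (v : EuclideanSpace ℝ (Fin n))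
    (hPm : ∀ i j, Measurable fun s => P s i j) : Measurable fun s => quadF (P s) v v := by
  unfold quadF; fun_prop

lemma right_slope (f : ℝ → ℝ) (t : ℝ) (a b : ℝ) (hat : a < t) (htb : t < b)
    (hf : IntervalIntegrable f volume a b)
    (h : HasDerivAt (fun x => ∫ s in t..x, f s) (f t) t) :
    Filter.Tendsto (fun h => h⁻¹ * ∫ s in t..(t+h), f s) (nhdsWithin 0 (Ioi 0)) (nhds (f t)) := by
  simpa using h.tendsto_slope_zero_right

theorem stmt_3 (n : ℕ) (hn : 1 ≤ n) (a b : ℝ) (hab : a < b)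
    (α β : ℝ) (hα0 : 0 < α) (hα1 : α ≤ 1) (hβ : 0 < β)
    (A B C : Matrix (Fin n) (Fin n) ℝ)
    (P Q R : ℝ → Matrix (Fin n) (Fin n) ℝ)
    (hPm : ∀ i j, Measurable fun s => P s i j) (hQm : ∀ i j, Measurable fun s => Q s i j)
    (hRm : ∀ i j, Measurable fun s => R s i j)
    (cP cQ cR : ℝ)
    (hPb : ∀ᵐ s ∂(volume : Measure ℝ), s ∈ Icc a b → ∀ i j, |P s i j| ≤ cP)
    (hQb : ∀ᵐ s ∂(volume : Measure ℝ), s ∈ Icc a b → ∀ i j, |Q s i j| ≤ cQ)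
    (hRb : ∀ᵐ s ∂(volume : Measure ℝ), s ∈ Icc a b → ∀ i j, |R s i j| ≤ cR)
    (hpos : ∀ ν : ℝ → EuclideanSpace ℝ (Fin n), Measurable ν →
      (∃ Cν, ∀ᵐ s ∂(volume : Measure ℝ), s ∈ Icc a b → ‖ν s‖ ≤ Cν) →
      ∀ w : EuclideanSpace ℝ (Fin n), ∀ η : ℝ → EuclideanSpace ℝ (Fin n),
      (∀ t, η t = w + ∫ s in a..t, ((t - s) ^ (α - 1) / Real.Gamma α) • ν s) →
      0 ≤ quadF A (η a) (η a) + 2 * quadF B (η a) (η b) + quadF C (η b) (η b)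
        + ∫ s in a..b, ((b - s) ^ (β - 1) / Real.Gamma β) *
            (quadF (P s) (η s) (η s) + 2 * quadF (Q s) (η s) (ν s)
              + quadF (R s) (ν s) (ν s))) :
    ∀ᵐ t ∂(volume.restrict (Icc a b)), ∀ v : EuclideanSpace ℝ (Fin n),
      0 ≤ ((b - t) ^ (β - 1) / Real.Gamma β) * quadF (R t) v v := by
  have hGb := Real.Gamma_pos_of_pos hβ
  set k : ℝ → ℝ := fun s => (b - s) ^ (β - 1) / Real.Gamma β with hk
  have hkm : Measurable k := by fun_prop
  have hkint : IntervalIntegrable k volume a b := (kernel_int β b a b hβ).div_const _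
  have hkR : ∀ i j, IntervalIntegrable (fun s => k s * R s i j) volume a b := by
    intro i j
    rw [intervalIntegrable_iff_integrableOn_Ioc_of_le hab.le]
    refine Integrable.mul_bdd (c := cR) hkint.1 ?_ ?_
    · exact (hRm i j).aestronglyMeasurable
    · rw [ae_restrict_iff' measurableSet_Ioc]
      filter_upwards [hRb] with s hs hsI
      exact hs (Ioc_subset_Icc_self hsI) i j
  have D1 := hkint.ae_hasDerivAt_integral
  have D2 : ∀ᵐ x, ∀ i j, x ∈ uIcc a b → ∀ c ∈ uIcc a b,
      HasDerivAt (fun x => ∫ t in c..x, k t * R t i j) (k x * R x i j) x :=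
    ae_all_iff.2 fun i => ae_all_iff.2 fun j => (hkR i j).ae_hasDerivAt_integral
  have N1 : ∀ᵐ x : ℝ, x ≠ a := by simp [ae_iff, measure_singleton]
  have N2 : ∀ᵐ x : ℝ, x ≠ b := by simp [ae_iff, measure_singleton]
  rw [ae_restrict_iff' measurableSet_Icc]
  filter_upwards [D1, D2, N1, N2] with t d1 d2 n1 n2 htI v
  have hat : a < t := lt_of_le_of_ne htI.1 (Ne.symm n1)
  have htb : t < b := lt_of_le_of_ne htI.2 n2
  rw [uIcc_of_le hab.le] at d1 d2
  have s1 := right_slope k t a b hat htb hkint (d1 htI t htI)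
  set r : ℝ → ℝ := fun s => quadF (R s) v v with hr
  have hkr : ∀ s, k s * r s = ∑ i, ∑ j, (v i * v j) * (k s * R s i j) := by
    intro s
    simp only [hr, quadF, Finset.mul_sum]
    refine Finset.sum_congr rfl fun i _ => Finset.sum_congr rfl fun j _ => by ring
  have s2 : Filter.Tendsto (fun h => h⁻¹ * ∫ s in t..(t+h), k s * r s) (nhdsWithin 0 (Ioi 0))
      (nhds (k t * r t)) := by
    have base : Filter.Tendsto (fun h => ∑ i, ∑ j, (v i * v j) * (h⁻¹ * ∫ s in t..(t+h), k s * R s i j))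
        (nhdsWithin 0 (Ioi 0)) (nhds (k t * r t)) := by
      rw [hkr]
      refine tendsto_finsetSum _ fun i _ => tendsto_finsetSum _ fun j _ => ?_
      exact (right_slope _ t a b hat htb (hkR i j) (d2 i j htI t htI)).const_mul _
    refine base.congr' ?_
    have : Ioo 0 (b - t) ∈ nhdsWithin (0:ℝ) (Ioi 0) := Ioo_mem_nhdsGT (by linarith)
    filter_upwards [this] with h hh
    have hsub : ∀ i j, IntervalIntegrable (fun s => k s * R s i j) volume t (t+h) := fun i j =>
      (hkR i j).mono_set (by
        rw [uIcc_of_le hab.le, uIcc_of_le (by linarith [hh.1])]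
        exact Icc_subset_Icc hat.le (by linarith [hh.2]))
    simp_rw [hkr]
    rw [intervalIntegral.integral_finsetSum]
    · rw [Finset.mul_sum]
      refine Finset.sum_congr rfl fun i _ => ?_
      rw [intervalIntegral.integral_finsetSum]
      · rw [Finset.mul_sum]
        refine Finset.sum_congr rfl fun j _ => ?_
        rw [intervalIntegral.integral_const_mul]; ring
      · intro j _; exact (hsub i j).const_mul _
    · intro i _
      have := IntervalIntegrable.sum (μ := volume) (a := t) (b := t + h) Finset.univ
        (f := fun j s => v i * v j * (k s * R s i j)) (fun j _ => (hsub i j).const_mul _)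
      refine this.congr (fun s _ => ?_)
      simp
  set S := ∑ i, ∑ j, |v i| * |v j| with hS
  have hS0 : 0 ≤ S := by positivity
  set M := (|cP| + |cQ| + |cR|) * S with hM
  have bd : ∀ (X : ℝ → Matrix (Fin n) (Fin n) ℝ) (c : ℝ), |c| ≤ |cP| + |cQ| + |cR| →
      (∀ᵐ s ∂(volume : Measure ℝ), s ∈ Icc a b → ∀ i j, |X s i j| ≤ c) →
      ∀ᵐ s, s ∈ Icc a b → |quadF (X s) v v| ≤ M := by
    intro X c hc hX
    filter_upwards [hX] with s hs hsI
    exact (quadF_bd _ v c (hs hsI)).trans (mul_le_mul_of_nonneg_right hc hS0)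
  have pP := abs_nonneg cP
  have pQ := abs_nonneg cQ
  have pR := abs_nonneg cR
  obtain ⟨D, hD⟩ : ∃ D, D = (α*Real.Gamma α)⁻¹^2 * ((b-t)^(α-1) * |quadF C v v| + M * (Real.Gamma β)⁻¹ *
        ∫ s in t..b, (b - s)^(β-1) * (s-t)^(α-1)) := ⟨_, rfl⟩
  have main : ∀ h ∈ Ioo 0 (b - t), 0 ≤ h^α * D +
      2 * M * (α*Real.Gamma α)⁻¹ * h^α * (h⁻¹ * ∫ s in t..(t+h), k s)
      + h⁻¹ * ∫ s in t..(t+h), k s * r s := by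
    intro h hh
    have hh0 : 0 < h := hh.1
    have hN := needle α β a b t h M (quadF C v v) hα0 hα1 hβ hh.1 hat (by linarith [hh.2])
      (fun s => quadF (P s) v v) (fun s => quadF (Q s) v v) r (quadF_meas P v hPm)
      (quadF_meas Q v hQm) (quadF_meas R v hRm) (bd P cP (by linarith) hPb)
      (bd Q cQ (by linarith) hQb) (bd R cR (by linarith) hRb) ?_
    · rw [← hD] at hN
      have := mul_nonneg (inv_nonneg.2 hh0.le) hN
      refine this.trans (le_of_eq ?_)
      simp only [hk]
      field_simp
    · set ν : ℝ → EuclideanSpace ℝ (Fin n) := indicator (Ioc t (t+h)) (fun _ => v) with hν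
      have hνs : ∀ s, ν s = (indicator (Ioc t (t+h)) (1 : ℝ → ℝ) s) • v := by
        intro s; by_cases hs : s ∈ Ioc t (t+h) <;> simp [hν, hs]
      have H := hpos ν (measurable_const.indicator measurableSet_Ioc)
        ⟨‖v‖, ae_of_all _ fun s _ => norm_indicator_le_norm_self _ _⟩ 0 _ (fun _ => rfl)
      have hη : ∀ u, a ≤ u → (0 : EuclideanSpace ℝ (Fin n)) +
          ∫ s in a..u, ((u - s) ^ (α - 1) / Real.Gamma α) • ν s = phi α t h u • v := by
        intro u hu
        rw [zero_add]
        exact eta_val α a t h u v hα0 hh0 hat.le hu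
      have hint : ∀ X : ℝ → EuclideanSpace ℝ (Fin n), (∀ u, a ≤ u → X u = phi α t h u • v) →
          0 ≤ quadF A (X a) (X a) + 2 * quadF B (X a) (X b) + quadF C (X b) (X b)
        + ∫ s in a..b, ((b - s) ^ (β - 1) / Real.Gamma β) *
            (quadF (P s) (X s) (X s) + 2 * quadF (Q s) (X s) (ν s)
              + quadF (R s) (ν s) (ν s)) →
          0 ≤ phi α t h b ^ 2 * quadF C v v + ∫ s in a..b, ((b - s) ^ (β - 1) / Real.Gamma β) *
       (phi α t h s ^ 2 * quadF (P s) v v + 2 * (phi α t h s * indicator (Ioc t (t+h)) 1 s * quadF (Q s) v v)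
         + indicator (Ioc t (t+h)) 1 s * r s) := by
        intro X hX H
        rw [hX a le_rfl, hX b hab.le, phi_zero α t h a hh0 hat.le, quadF_smul, quadF_smul, quadF_smul] at H
        refine H.trans (le_of_eq ?_)
        congr 1
        · ring
        · refine intervalIntegral.integral_congr fun s hs => ?_
          rw [uIcc_of_le hab.le] at hs
          simp only [hX s hs.1, hνs, quadF_smul, hr]
          have : indicator (Ioc t (t+h)) (1 : ℝ → ℝ) s * indicator (Ioc t (t+h)) (1 : ℝ → ℝ) s
            = indicator (Ioc t (t+h)) (1 : ℝ → ℝ) s := by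
            by_cases hs : s ∈ Ioc t (t+h) <;> simp [hs]
          rw [this]; ring
      exact hint _ hη H
  have ha : Filter.Tendsto (fun h : ℝ => h^α) (nhdsWithin 0 (Ioi 0)) (nhds 0) := by
    have : ContinuousAt (fun h : ℝ => h^α) 0 := Real.continuousAt_rpow_const _ _ (Or.inr hα0.le)
    have h2 := this.tendsto
    simp only [Real.zero_rpow hα0.ne'] at h2
    exact h2.mono_left nhdsWithin_le_nhds
  have lim := ((ha.mul_const D).add ((ha.const_mul (2 * M * (α*Real.Gamma α)⁻¹)).mul s1)).add s2
  have fin := ge_of_tendsto lim (Filter.mem_of_superset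
    (Ioo_mem_nhdsGT (show (0:ℝ) < b - t by linarith)) main)
  simpa using fin
end

section
/- (Euler–Lagrange equation, unconstrained case.) Let 0 < α ≤ 1 and β > 0, and let φ : ℝⁿ×ℝⁿ → ℝ and L : ℝⁿ×ℝⁿ×[a,b] → ℝ be of class C². For (u',y') ∈ L^∞([a,b],ℝⁿ)×ℝⁿ set x(t,u',y') := y' + ∫_a^t ((t−s)^{α−1}/Γ(α)) u'(s) ds and 𝓛(u',y') := φ(y', x(b,u',y')) + ∫_a^b ((b−s)^{β−1}/Γ(β)) L( x(s,u',y'), u'(s), s ) ds. Suppose (u,y) ∈ L^∞([a,b],ℝⁿ)×ℝⁿ satisfies 𝓛(u,y) ≤ 𝓛(u',y') for all (u',y') ∈ L^∞([a,b],ℝⁿ)×ℝⁿ, and write x := x(·,u,y) and p̃(s) := ((b−s)^{β−1}/Γ(β)) ∂₂L(x(s),u(s),s). Then there exists an absolutely continuous function q : [a,b] → ℝⁿ such that q(t) = ∫_t^b ((s−t)^{−α}/Γ(1−α)) p̃(s) ds for almost every t ∈ [a,b] when α < 1 (and q(t) = p̃(t) for almost every t when α = 1), and q'(t) = ((b−t)^{β−1}/Γ(β))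 ∂₁L(x(t),u(t),t) for almost every t ∈ [a,b]. Equivalently, p̃ possesses a right Riemann–Liouville fractional derivative of order α satisfying D^α_{b−}[p̃](t) = −((b−t)^{β−1}/Γ(β)) ∂₁L(x(t),u(t),t) a.e. -/
open MeasureTheory Set
open scoped RealInnerProductSpace

/-- The trajectory `x(·,u,y)` associated with a Caputo fractional derivative `u`
of order `α` and initial condition `y`. -/
noncomputable def traj (n : ℕ) (a α : ℝ) (u : ℝ → EuclideanSpace ℝ (Fin n))
    (y : EuclideanSpace ℝ (Fin n)) (t : ℝ) : EuclideanSpace ℝ (Fin n) :=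
  y + ∫ s in a..t, ((t - s) ^ (α - 1) / Real.Gamma α) • u s

/-- The Bolza functional. -/
noncomputable def bolza (n : ℕ) (a b α β : ℝ)
    (φ : EuclideanSpace ℝ (Fin n) × EuclideanSpace ℝ (Fin n) → ℝ)
    (L : EuclideanSpace ℝ (Fin n) × EuclideanSpace ℝ (Fin n) × ℝ → ℝ)
    (u : ℝ → EuclideanSpace ℝ (Fin n)) (y : EuclideanSpace ℝ (Fin n)) : ℝ :=
  φ (y, traj n a α u y b) +
    ∫ s in a..b, ((b - s) ^ (β - 1) / Real.Gamma β) * L (traj n a α u y s, u s, s)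

/-- Membership in `L^∞([a,b],ℝⁿ)` (a measurable, essentially bounded representative). -/
def admissible (n : ℕ) (a b : ℝ) (u : ℝ → EuclideanSpace ℝ (Fin n)) : Prop :=
  Measurable u ∧ ∃ C : ℝ, ∀ᵐ s ∂(volume : Measure ℝ), s ∈ Icc a b → ‖u s‖ ≤ C


noncomputable def KK (γ s t : ℝ) : ℝ := if t ≤ s then (s - t) ^ (γ - 1) else 0

lemma KK_meas (γ : ℝ) : Measurable (fun p : ℝ × ℝ => KK γ p.1 p.2) := by
  unfold KK
  refine Measurable.ite (measurableSet_le measurable_snd measurable_fst) ?_ measurable_const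
  fun_prop

lemma KK_nonneg (γ s t : ℝ) : 0 ≤ KK γ s t := by
  unfold KK; split_ifs with h
  · exact Real.rpow_nonneg (by linarith) _
  · exact le_rfl

lemma KK_left {E : Type*} [NormedAddCommGroup E] [NormedSpace ℝ E] {a b : ℝ} (γ : ℝ) {s : ℝ}
    (hs : s ∈ Icc a b) (f : ℝ → E) :
    ∫ t in a..s, (s - t) ^ (γ - 1) • f t = ∫ t in Ioc a b, KK γ s t • f t := by
  rw [intervalIntegral.integral_of_le hs.1]
  have h1 : Ioc a s = Ioc a b ∩ Iic s := by
    ext t; simp only [mem_Ioc, mem_inter_iff, mem_Iic]; have := hs.2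
    constructor
    · rintro ⟨h, h'⟩; exact ⟨⟨h, by linarith⟩, h'⟩
    · rintro ⟨⟨h, _⟩, h'⟩; exact ⟨h, h'⟩
  rw [h1, ← setIntegral_indicator measurableSet_Iic]
  congr 1; ext t
  by_cases h : t ≤ s <;> simp [KK, indicator, h]

lemma KK_right {E : Type*} [NormedAddCommGroup E] [NormedSpace ℝ E] {a b : ℝ} (γ : ℝ) {t : ℝ}
    (ht : t ∈ Ioc a b) (f : ℝ → E) :
    ∫ s in t..b, (s - t) ^ (γ - 1) • f s = ∫ s in Ioc a b, KK γ s t • f s := by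
  rw [intervalIntegral.integral_of_le ht.2, ← integral_Icc_eq_integral_Ioc]
  have h1 : Icc t b = Ioc a b ∩ Ici t := by
    ext s; simp only [mem_Ioc, mem_Icc, mem_inter_iff, mem_Ici]; have := ht.1
    constructor
    · rintro ⟨h, h'⟩; exact ⟨⟨by linarith, h'⟩, h⟩
    · rintro ⟨⟨_, h⟩, h'⟩; exact ⟨h', h⟩
  rw [h1, ← setIntegral_indicator measurableSet_Ici]
  congr 1; ext s
  by_cases h : t ≤ s <;> simp [KK, indicator, h]

lemma rpow_left_int {γ : ℝ} (hγ : 0 < γ) (s a c : ℝ) :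
    IntervalIntegrable (fun t => (s - t) ^ (γ - 1)) volume a c := by
  have := (intervalIntegral.intervalIntegrable_rpow' (a := s - a) (b := s - c) (r := γ - 1)
    (by linarith)).comp_sub_left s
  simpa using this

lemma KK_integrable {γ a b s : ℝ} (hγ : 0 < γ) (hs : s ∈ Icc a b) :
    IntegrableOn (KK γ s) (Ioc a b) := by
  have h := (rpow_left_int hγ s a s)
  rw [intervalIntegrable_iff_integrableOn_Ioc_of_le hs.1] at h
  have h2 : IntegrableOn ((Iic s).indicator (fun t => (s - t) ^ (γ - 1))) (Ioc a b) := by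
    rw [IntegrableOn, integrable_indicator_iff measurableSet_Iic, IntegrableOn,
      Measure.restrict_restrict measurableSet_Iic]
    refine h.mono_set ?_
    rintro t ⟨h1, h2⟩; exact ⟨h2.1, h1⟩
  refine h2.congr (Filter.Eventually.of_forall fun t => ?_)
  by_cases h : t ≤ s <;> simp [KK, indicator, h]

lemma KK_integral_le {γ a b s : ℝ} (hγ : 0 < γ) (hs : s ∈ Icc a b) :
    ∫ t in Ioc a b, KK γ s t ≤ (b - a) ^ γ / γ := by
  have h := KK_left γ hs (fun _ => (1:ℝ))
  simp only [smul_eq_mul, mul_one] at h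
  rw [← h, intervalIntegral.integral_comp_sub_left (fun x => x ^ (γ - 1)) s,
    integral_rpow (Or.inl (by linarith))]
  simp only [sub_self, sub_add_cancel, Real.zero_rpow hγ.ne', sub_zero]
  have := hs.1; have := hs.2
  gcongr

lemma KK_apply_bound {γ a b s C : ℝ} (hγ : 0 < γ) (hs : s ∈ Icc a b) {ψ : ℝ → ℝ}
    (hC : ∀ t ∈ Ioc a b, |ψ t| ≤ C) :
    ‖∫ t in Ioc a b, KK γ s t * ψ t‖ ≤ (b - a) ^ γ / γ * |C| := by
  calc _ ≤ ∫ t in Ioc a b, KK γ s t * |C| := by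
        refine norm_integral_le_of_norm_le ((KK_integrable hγ hs).mul_const _) ?_
        filter_upwards [ae_restrict_mem measurableSet_Ioc] with t ht
        rw [norm_mul, Real.norm_of_nonneg (KK_nonneg _ _ _), Real.norm_eq_abs]
        exact mul_le_mul_of_nonneg_left ((hC t ht).trans (le_abs_self _)) (KK_nonneg _ _ _)
    _ ≤ _ := by
        rw [integral_mul_const]
        exact mul_le_mul_of_nonneg_right (KK_integral_le hγ hs) (abs_nonneg _)

lemma KK_apply_meas {E : Type*} [NormedAddCommGroup E] [NormedSpace ℝ E]
    (γ a b : ℝ) {f : ℝ → E} (hf : StronglyMeasurable f) :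
    StronglyMeasurable (fun s => ∫ t in Ioc a b, KK γ s t • f t) := by
  apply StronglyMeasurable.integral_prod_right (f := fun s t => KK γ s t • f t)
  exact (KK_meas γ).stronglyMeasurable.smul (hf.comp_measurable measurable_snd)

section Fub
variable {E : Type*} [NormedAddCommGroup E] [NormedSpace ℝ E] [CompleteSpace E]

lemma fub_int {γ a b : ℝ} (hγ : 0 < γ) {ψ : ℝ → ℝ} (hψ : Measurable ψ) {C : ℝ}
    (hC : ∀ t ∈ Ioc a b, |ψ t| ≤ C) {g : ℝ → E} (hg : IntegrableOn g (Ioc a b)) :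
    Integrable (fun p : ℝ × ℝ => (KK γ p.1 p.2 * ψ p.2) • g p.1)
      ((volume.restrict (Ioc a b)).prod (volume.restrict (Ioc a b))) := by
  have hm : AEStronglyMeasurable (fun p : ℝ × ℝ => (KK γ p.1 p.2 * ψ p.2) • g p.1)
      ((volume.restrict (Ioc a b)).prod (volume.restrict (Ioc a b))) := by
    refine AEStronglyMeasurable.smul ?_ hg.1.comp_fst
    exact ((KK_meas γ).mul (hψ.comp measurable_snd)).aestronglyMeasurable
  have hb : ∀ s ∈ Ioc a b, Integrable (fun t => KK γ s t * ψ t) (volume.restrict (Ioc a b)) := by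
    intro s hs
    refine (KK_integrable hγ (Ioc_subset_Icc_self hs)).mul_bdd (c := C) hψ.aestronglyMeasurable ?_
    filter_upwards [ae_restrict_mem measurableSet_Ioc] with t ht using hC t ht
  rw [integrable_prod_iff hm]
  constructor
  · filter_upwards [ae_restrict_mem measurableSet_Ioc] with s hs
    exact (hb s hs).smul_const _
  · refine Integrable.mono' (hg.norm.const_mul ((b - a) ^ γ / γ * |C|)) hm.norm.integral_prod_right' ?_
    filter_upwards [ae_restrict_mem measurableSet_Ioc] with s hs
    have h1 := KK_apply_bound (γ := γ) (C := C) hγ (Ioc_subset_Icc_self hs) (ψ := fun t => |ψ t|)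
      (by simpa using hC)
    have : ∀ t, ‖(KK γ s t * ψ t) • g s‖ = (KK γ s t * |ψ t|) * ‖g s‖ := by
      intro t
      rw [norm_smul, norm_mul, Real.norm_of_nonneg (KK_nonneg _ _ _), Real.norm_eq_abs]
    simp only [this]
    rw [integral_mul_const, norm_mul, norm_norm]
    exact mul_le_mul_of_nonneg_right h1 (norm_nonneg _)

lemma fub_swap {γ a b : ℝ} (hγ : 0 < γ) {ψ : ℝ → ℝ} (hψ : Measurable ψ) {C : ℝ}
    (hC : ∀ t ∈ Ioc a b, |ψ t| ≤ C) {g : ℝ → E} (hg : IntegrableOn g (Ioc a b)) :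
    ∫ s in Ioc a b, (∫ t in Ioc a b, KK γ s t * ψ t) • g s =
      ∫ t in Ioc a b, ψ t • ∫ s in Ioc a b, KK γ s t • g s := by
  have h := integral_integral_swap (f := fun s t => (KK γ s t * ψ t) • g s) (fub_int hγ hψ hC hg)
  simp_rw [integral_smul_const] at h
  refine h.trans ?_
  congr 1; ext t; rw [← integral_smul]; congr 1; ext s; rw [smul_smul, mul_comm]

lemma fub_right_int {γ a b : ℝ} (hγ : 0 < γ) {g : ℝ → E} (hg : IntegrableOn g (Ioc a b)) :
    Integrable (fun t => ∫ s in Ioc a b, KK γ s t • g s) (volume.restrict (Ioc a b)) := by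
  have h := fub_int (γ := γ) (ψ := fun _ => 1) (C := 1) hγ measurable_const (by simp) hg
  simpa using h.integral_prod_right

end Fub

lemma beta_real {α : ℝ} (h0 : 0 < α) (h1 : α < 1) {r s : ℝ} (hrs : r < s) :
    ∫ τ in r..s, (τ - r) ^ (-α) * (s - τ) ^ (α - 1) = Real.Gamma α * Real.Gamma (1 - α) := by
  have h := Complex.betaIntegral_scaled ((1 - α : ℝ) : ℂ) ((α : ℝ) : ℂ) (a := s - r) (by linarith)
  have hG := Complex.Gamma_mul_Gamma_eq_betaIntegral (s := ((1 - α : ℝ) : ℂ)) (t := ((α : ℝ) : ℂ))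
    (by simpa using h1) (by simpa using h0)
  have e1 : ((1 - α : ℝ) : ℂ) + ((α : ℝ) : ℂ) = 1 := by push_cast; ring
  rw [e1, Complex.Gamma_one, one_mul] at hG
  rw [e1, sub_self, Complex.cpow_zero, one_mul, ← hG, Complex.Gamma_ofReal, Complex.Gamma_ofReal] at h
  have h2 : ∫ τ in r..s, (τ - r) ^ (-α) * (s - τ) ^ (α - 1) =
      ∫ x in (0:ℝ)..(s - r), x ^ (-α) * (s - r - x) ^ (α - 1) := by
    have := intervalIntegral.integral_comp_sub_right (a := r) (b := s) (fun x => x ^ (-α) * (s - r - x) ^ (α - 1)) r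
    rw [sub_self] at this
    rw [← this]; congr 1; ext x; congr 2; ring
  rw [h2]
  apply Complex.ofReal_injective
  rw [← intervalIntegral.integral_ofReal]
  rw [Complex.ofReal_mul, mul_comm, ← h]
  apply intervalIntegral.integral_congr
  intro x hx
  rw [uIcc_of_le (by linarith)] at hx
  simp only
  rw [Complex.ofReal_mul, Complex.ofReal_cpow hx.1, Complex.ofReal_cpow (by linarith [hx.2])]
  push_cast
  congr 2
  ring

lemma semigroup {α a b s : ℝ} (h0 : 0 < α) (h1 : α < 1) (hs : s ∈ Icc a b) {ψ : ℝ → ℝ}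
    (hψ : Measurable ψ) {C : ℝ} (hC : ∀ t ∈ Ioc a b, |ψ t| ≤ C) :
    ∫ τ in Ioc a b, KK α s τ * (∫ r in Ioc a b, KK (1 - α) τ r * ψ r) =
      Real.Gamma α * Real.Gamma (1 - α) * ∫ r in Ioc a b, KK 1 s r * ψ r := by
  have h := fub_swap (γ := 1 - α) (by linarith) hψ hC (KK_integrable h0 hs)
  simp only [smul_eq_mul] at h
  simp only [mul_comm (KK α s _)]
  rw [h, ← integral_const_mul]
  apply integral_congr_ae
  have hne : ∀ᵐ r ∂(volume.restrict (Ioc a b)), r ≠ s := by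
    apply ae_restrict_of_ae
    simp [ae_iff]
  filter_upwards [ae_restrict_mem measurableSet_Ioc, hne] with r hr hne
  have h3 := KK_right (1 - α) hr (fun τ => KK α s τ)
  simp only [smul_eq_mul] at h3
  rw [← h3]
  rcases lt_or_gt_of_ne hne with hlt | hgt
  · have h4 := KK_left (a := r) (b := b) α (s := s) ⟨hlt.le, hs.2⟩ (fun τ => (τ - r) ^ (1 - α - 1))
    simp only [smul_eq_mul] at h4
    rw [intervalIntegral.integral_of_le hr.2]
    simp only [mul_comm _ (KK α s _)]
    rw [← h4, ← beta_real h0 h1 hlt]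
    simp [KK, hlt.le]
    rw [mul_comm]
    congr 2; ext τ; rw [mul_comm]
  · rw [intervalIntegral.integral_of_le hr.2]
    have : ∫ τ in Ioc r b, (τ - r) ^ (1 - α - 1) * KK α s τ = 0 := by
      rw [setIntegral_congr_fun (g := fun _ => (0:ℝ)) measurableSet_Ioc]
      · simp
      · intro τ hτ
        have : ¬ τ ≤ s := by have := hτ.1; linarith
        simp [KK, this]
    rw [this]
    simp [KK, not_le.mpr hgt]

lemma deriv_int {F : Type*} [NormedAddCommGroup F] [NormedSpace ℝ F] [FiniteDimensional ℝ F]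
    {μ : Measure ℝ} {L : F → ℝ} (hL : ContDiff ℝ 1 L) {Z V : ℝ → F}
    (hZ : AEStronglyMeasurable Z μ) (hV : AEStronglyMeasurable V μ) {C D : ℝ}
    (hZC : ∀ᵐ s ∂μ, ‖Z s‖ ≤ C) (hVD : ∀ᵐ s ∂μ, ‖V s‖ ≤ D) {w : ℝ → ℝ} (hw : Integrable w μ) :
    HasDerivAt (fun ε : ℝ => ∫ s, w s * L (Z s + ε • V s) ∂μ)
      (∫ s, w s * fderiv ℝ L (Z s) (V s) ∂μ) 0 := by
  have hcomp : IsCompact (Metric.closedBall (0:F) (C + |D|)) := isCompact_closedBall _ _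
  obtain ⟨M, hM⟩ := hcomp.exists_bound_of_continuousOn hL.continuous.continuousOn
  obtain ⟨M', hM'⟩ := hcomp.exists_bound_of_continuousOn
    (hL.continuous_fderiv (by norm_num)).continuousOn
  have hmem : ∀ s, ‖Z s‖ ≤ C → ‖V s‖ ≤ D → ∀ ε ∈ Metric.ball (0:ℝ) 1,
      Z s + ε • V s ∈ Metric.closedBall (0:F) (C + |D|) := by
    intro s h1 h2 ε hε
    rw [mem_closedBall_zero_iff]
    refine (norm_add_le _ _).trans (add_le_add h1 ?_)
    rw [norm_smul]
    have : ‖ε‖ ≤ 1 := by simpa using (mem_ball_zero_iff.mp hε).le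
    calc ‖ε‖ * ‖V s‖ ≤ 1 * |D| := by
          gcongr; exact h2.trans (le_abs_self _)
      _ = _ := one_mul _
  have hmeas : ∀ ε : ℝ, AEStronglyMeasurable (fun s => w s * L (Z s + ε • V s)) μ := fun ε =>
    hw.1.mul (hL.continuous.comp_aestronglyMeasurable (hZ.add (hV.const_smul ε)))
  have hcont := hL.continuous_fderiv (by norm_num)
  have key := hasDerivAt_integral_of_dominated_loc_of_deriv_le (μ := μ) (x₀ := (0:ℝ))
    (s := Metric.ball (0:ℝ) 1)
    (F := fun ε s => w s * L (Z s + ε • V s))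
    (F' := fun ε s => w s * fderiv ℝ L (Z s + ε • V s) (V s))
    (bound := fun s => ‖w s‖ * (M' * |D|)) (Metric.ball_mem_nhds _ one_pos)
    (Filter.Eventually.of_forall hmeas) ?_ ?_ ?_ ?_ ?_
  · simpa using key.2
  · refine hw.mul_bdd (c := M) ?_ ?_
    · exact (hL.continuous.comp_aestronglyMeasurable (hZ.add (hV.const_smul _)))
    · filter_upwards [hZC, hVD] with s h1 h2
      exact hM _ (hmem s h1 h2 0 (by simp))
  · refine hw.1.mul ?_
    have : Continuous (fun p : F × F => fderiv ℝ L p.1 p.2) := by fun_prop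
    exact this.comp_aestronglyMeasurable ((hZ.add (hV.const_smul _)).prodMk hV)
  · filter_upwards [hZC, hVD] with s h1 h2 ε hε
    rw [norm_mul]
    gcongr
    refine (ContinuousLinearMap.le_opNorm _ _).trans ?_
    have := hM' _ (hmem s h1 h2 ε hε)
    have h3 := h2.trans (le_abs_self D)
    have h4 := (norm_nonneg _).trans this
    gcongr
  · exact hw.norm.mul_const _
  · filter_upwards with s ε hε
    have h1 : HasDerivAt (fun ε : ℝ => Z s + ε • V s) (V s) ε := by
      simpa using ((hasDerivAt_id ε).smul_const (V s)).const_add (Z s)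
    have h2 := (hL.differentiable (by norm_num) (Z s + ε • V s)).hasFDerivAt
    exact (h2.comp_hasDerivAt ε h1).const_mul (w s)

lemma KK_smul_int {E : Type*} [NormedAddCommGroup E] [NormedSpace ℝ E] {γ a b s C : ℝ}
    (hγ : 0 < γ) (hs : s ∈ Icc a b) {f : ℝ → E}
    (hf : AEStronglyMeasurable f (volume.restrict (Ioc a b)))
    (hC : ∀ᵐ t ∂(volume.restrict (Ioc a b)), ‖f t‖ ≤ C) :
    Integrable (fun t => KK γ s t • f t) (volume.restrict (Ioc a b)) :=
  (KK_integrable hγ hs).smul_bdd C hf hC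

lemma KK_smul_bound {E : Type*} [NormedAddCommGroup E] [NormedSpace ℝ E] {γ a b s C : ℝ}
    (hγ : 0 < γ) (hs : s ∈ Icc a b) {f : ℝ → E}
    (hC : ∀ᵐ t ∂(volume.restrict (Ioc a b)), ‖f t‖ ≤ C) :
    ‖∫ t in Ioc a b, KK γ s t • f t‖ ≤ (b - a) ^ γ / γ * |C| := by
  calc _ ≤ ∫ t in Ioc a b, KK γ s t * |C| := by
        refine norm_integral_le_of_norm_le ((KK_integrable hγ hs).mul_const _) ?_
        filter_upwards [hC] with t ht
        rw [norm_smul, Real.norm_of_nonneg (KK_nonneg _ _ _)]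
        exact mul_le_mul_of_nonneg_left (ht.trans (le_abs_self _)) (KK_nonneg _ _ _)
    _ ≤ _ := by
        rw [integral_mul_const]
        exact mul_le_mul_of_nonneg_right (KK_integral_le hγ hs) (abs_nonneg _)

lemma traj_eq {n : ℕ} {a b α s : ℝ} (hs : s ∈ Icc a b) (u : ℝ → EuclideanSpace ℝ (Fin n))
    (y : EuclideanSpace ℝ (Fin n)) :
    traj n a α u y s = y + ∫ τ in Ioc a b, KK α s τ • ((Real.Gamma α)⁻¹ • u τ) := by
  rw [← KK_left α hs, traj]
  simp only [smul_smul, div_eq_mul_inv]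

lemma adm_ae {n : ℕ} {a b : ℝ} {u : ℝ → EuclideanSpace ℝ (Fin n)} (h : admissible n a b u) :
    ∃ C, ∀ᵐ s ∂(volume.restrict (Ioc a b)), ‖u s‖ ≤ C := by
  obtain ⟨-, C, hC⟩ := h
  refine ⟨C, ?_⟩
  filter_upwards [ae_restrict_of_ae hC, ae_restrict_mem measurableSet_Ioc] with s h1 h2
  exact h1 (Ioc_subset_Icc_self h2)

lemma traj_add {n : ℕ} {a b α s : ℝ} (hα : 0 < α) (hs : s ∈ Icc a b)
    {u : ℝ → EuclideanSpace ℝ (Fin n)} (hu : admissible n a b u)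
    (y e : EuclideanSpace ℝ (Fin n)) {v : ℝ → ℝ} (hv : Measurable v) {D : ℝ}
    (hD : ∀ t ∈ Icc a b, |v t| ≤ D) (ε : ℝ) :
    traj n a α (fun t => u t + ε • (v t • e)) y s = traj n a α u y s +
      ε • ((∫ τ in Ioc a b, KK α s τ * ((Real.Gamma α)⁻¹ * v τ)) • e) := by
  obtain ⟨C, hC⟩ := adm_ae hu
  have i1 : Integrable (fun t => KK α s t • ((Real.Gamma α)⁻¹ • u t))
      (volume.restrict (Ioc a b)) := by
    refine KK_smul_int (C := ‖(Real.Gamma α)⁻¹‖ * C) hα hs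
      (hu.1.const_smul (Real.Gamma α)⁻¹).aestronglyMeasurable ?_
    filter_upwards [hC] with t ht
    rw [norm_smul]; gcongr
  have i2 : Integrable (fun t => KK α s t • ((Real.Gamma α)⁻¹ * v t))
      (volume.restrict (Ioc a b)) := by
    refine KK_smul_int (C := ‖(Real.Gamma α)⁻¹‖ * D) hα hs (hv.aestronglyMeasurable.const_mul _) ?_
    filter_upwards [ae_restrict_mem measurableSet_Ioc] with t ht
    rw [norm_mul]
    exact mul_le_mul_of_nonneg_left (hD t (Ioc_subset_Icc_self ht)) (norm_nonneg _)
  have i3 : Integrable (fun t => ε • ((KK α s t * ((Real.Gamma α)⁻¹ * v t)) • e))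
      (volume.restrict (Ioc a b)) := (i2.smul_const e).smul ε
  rw [traj_eq hs, traj_eq hs, ← integral_smul_const, ← integral_smul, add_assoc]
  congr 1
  rw [← integral_add i1 i3]
  congr 1; ext1 t
  simp only [smul_add, smul_smul]
  congr 2; ring

lemma traj_meas {n : ℕ} {a b α : ℝ} {u : ℝ → EuclideanSpace ℝ (Fin n)} (hu : Measurable u)
    (y : EuclideanSpace ℝ (Fin n)) :
    AEStronglyMeasurable (traj n a α u y) (volume.restrict (Ioc a b)) := by
  have : StronglyMeasurable
      (fun s => y + ∫ τ in Ioc a b, KK α s τ • ((Real.Gamma α)⁻¹ • u τ)) :=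
    stronglyMeasurable_const.add (KK_apply_meas α a b (f := (Real.Gamma α)⁻¹ • u) (hu.stronglyMeasurable.const_smul _))
  refine this.aestronglyMeasurable.congr ?_
  filter_upwards [ae_restrict_mem measurableSet_Ioc] with s hs
  exact (traj_eq (Ioc_subset_Icc_self hs) u y).symm

lemma traj_bdd {n : ℕ} {a b α : ℝ} (hα : 0 < α) {u : ℝ → EuclideanSpace ℝ (Fin n)}
    (hu : admissible n a b u) (y : EuclideanSpace ℝ (Fin n)) :
    ∃ C, ∀ s ∈ Icc a b, ‖traj n a α u y s‖ ≤ C := by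
  obtain ⟨C, hC⟩ := adm_ae hu
  refine ⟨‖y‖ + (b - a) ^ α / α * |‖(Real.Gamma α)⁻¹‖ * C|, fun s hs => ?_⟩
  rw [traj_eq hs]
  refine (norm_add_le _ _).trans (add_le_add le_rfl (KK_smul_bound hα hs ?_))
  filter_upwards [hC] with t ht
  rw [norm_smul]; gcongr

lemma w_int {a b β : ℝ} (hab : a < b) (hβ : 0 < β) :
    Integrable (fun s => (b - s) ^ (β - 1) / Real.Gamma β) (volume.restrict (Ioc a b)) :=
  ((intervalIntegrable_iff_integrableOn_Ioc_of_le hab.le).mp (rpow_left_int hβ b a b)).div_const _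

lemma Z_bdd {n : ℕ} {a b α : ℝ} (hα : 0 < α) {u : ℝ → EuclideanSpace ℝ (Fin n)}
    (hu : admissible n a b u) (y : EuclideanSpace ℝ (Fin n)) :
    ∃ C, ∀ᵐ s ∂(volume.restrict (Ioc a b)), ‖(traj n a α u y s, u s, s)‖ ≤ C := by
  obtain ⟨C, hC⟩ := adm_ae hu
  obtain ⟨C', hC'⟩ := traj_bdd hα hu y
  refine ⟨max C' (max C (max |a| |b|)), ?_⟩
  filter_upwards [hC, ae_restrict_mem measurableSet_Ioc] with s h1 h2
  rw [Prod.norm_def, Prod.norm_def]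
  exact max_le_max (hC' s (Ioc_subset_Icc_self h2)) (max_le_max h1
    (abs_le_max_abs_abs h2.1.le h2.2))

lemma Z_meas {n : ℕ} {a b α : ℝ} {u : ℝ → EuclideanSpace ℝ (Fin n)}
    (hu : admissible n a b u) (y : EuclideanSpace ℝ (Fin n)) :
    AEStronglyMeasurable (fun s => (traj n a α u y s, u s, s)) (volume.restrict (Ioc a b)) :=
  (traj_meas hu.1 y).prodMk (hu.1.aestronglyMeasurable.prodMk
    measurable_id.aestronglyMeasurable)

lemma first_var (n : ℕ) (a b : ℝ) (hab : a < b)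
    (α β : ℝ) (hα0 : 0 < α) (hβ : 0 < β)
    (φ : EuclideanSpace ℝ (Fin n) × EuclideanSpace ℝ (Fin n) → ℝ)
    (L : EuclideanSpace ℝ (Fin n) × EuclideanSpace ℝ (Fin n) × ℝ → ℝ)
    (hφ : ContDiff ℝ 2 φ) (hL : ContDiff ℝ 2 L)
    (u : ℝ → EuclideanSpace ℝ (Fin n)) (y : EuclideanSpace ℝ (Fin n))
    (hadm : admissible n a b u)
    (hmin : ∀ u' : ℝ → EuclideanSpace ℝ (Fin n), ∀ y' : EuclideanSpace ℝ (Fin n),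
      admissible n a b u' → bolza n a b α β φ L u y ≤ bolza n a b α β φ L u' y')
    {v ξ : ℝ → ℝ} (hv : Measurable v) {D : ℝ} (hD : ∀ t ∈ Icc a b, |v t| ≤ D)
    (hξ : ∀ s ∈ Icc a b, ξ s = ∫ τ in Ioc a b, KK α s τ * ((Real.Gamma α)⁻¹ * v τ))
    (e : EuclideanSpace ℝ (Fin n)) :
    fderiv ℝ φ (y, traj n a α u y b) (0, ξ b • e) +
      ∫ s in Ioc a b, ((b - s) ^ (β - 1) / Real.Gamma β) *
        fderiv ℝ L (traj n a α u y s, u s, s) (ξ s • e, v s • e, 0) = 0 := by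
  obtain ⟨C, hC⟩ := Z_bdd hα0 hadm y
  have hbm : b ∈ Icc a b := ⟨hab.le, le_rfl⟩
  have hξm : AEStronglyMeasurable ξ (volume.restrict (Ioc a b)) := by
    have := KK_apply_meas α a b (hv.const_mul (Real.Gamma α)⁻¹).stronglyMeasurable
    refine this.aestronglyMeasurable.congr ?_
    filter_upwards [ae_restrict_mem measurableSet_Ioc] with s hs
    rw [hξ s (Ioc_subset_Icc_self hs)]
    simp only [smul_eq_mul]
  have hξb : ∀ s ∈ Icc a b, ‖ξ s‖ ≤ (b - a) ^ α / α * |‖(Real.Gamma α)⁻¹‖ * D| := by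
    intro s hs
    rw [hξ s hs]
    refine KK_smul_bound hα0 hs (f := fun τ => (Real.Gamma α)⁻¹ * v τ) ?_
    filter_upwards [ae_restrict_mem measurableSet_Ioc] with t ht
    rw [norm_mul]
    exact mul_le_mul_of_nonneg_left (hD t (Ioc_subset_Icc_self ht)) (norm_nonneg _)
  have hVm : AEStronglyMeasurable (fun s => (ξ s • e, v s • e, (0:ℝ)))
      (volume.restrict (Ioc a b)) :=
    (hξm.smul_const e).prodMk ((hv.aestronglyMeasurable.smul_const e).prodMk
      aestronglyMeasurable_const)
  obtain ⟨D', hVD⟩ : ∃ D', ∀ᵐ s ∂(volume.restrict (Ioc a b)),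
      ‖(ξ s • e, v s • e, (0:ℝ))‖ ≤ D' := by
    refine ⟨max (((b - a) ^ α / α * |‖(Real.Gamma α)⁻¹‖ * D|) * ‖e‖) (max (D * ‖e‖) 0), ?_⟩
    filter_upwards [ae_restrict_mem measurableSet_Ioc] with s hs
    have hs' := Ioc_subset_Icc_self hs
    rw [Prod.norm_def, Prod.norm_def]
    refine max_le_max ?_ (max_le_max ?_ (by simp))
    · simp only [norm_smul]
      exact mul_le_mul_of_nonneg_right (hξb s hs') (norm_nonneg _)
    · simp only [norm_smul]
      exact mul_le_mul_of_nonneg_right (hD s hs') (norm_nonneg _)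
  have h1 := deriv_int (hL.of_le (by norm_num)) (Z_meas (α := α) hadm y) hVm hC hVD (w_int hab hβ)
  have h2 : HasDerivAt (fun ε : ℝ => φ ((y, traj n a α u y b) + ε • ((0 : EuclideanSpace ℝ (Fin n)), ξ b • e)))
      (fderiv ℝ φ (y, traj n a α u y b) (0, ξ b • e)) 0 := by
    have g1 : HasDerivAt (fun ε : ℝ => (y, traj n a α u y b) + ε • ((0 : EuclideanSpace ℝ (Fin n)), ξ b • e))
        (0, ξ b • e) 0 := by
      simpa using ((hasDerivAt_id (0:ℝ)).smul_const
        ((0 : EuclideanSpace ℝ (Fin n)), ξ b • e)).const_add (y, traj n a α u y b)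
    have g2 := (hφ.differentiable (by norm_num) ((y, traj n a α u y b) +
      (0:ℝ) • ((0 : EuclideanSpace ℝ (Fin n)), ξ b • e))).hasFDerivAt
    have := g2.comp_hasDerivAt (0:ℝ) g1
    simpa [Function.comp_def] using this
  have h3 := h2.add h1
  refine IsLocalMin.hasDerivAt_eq_zero ?_ h3
  have hB : ∀ ε : ℝ, bolza n a b α β φ L (fun t => u t + ε • (v t • e)) y =
      φ ((y, traj n a α u y b) + ε • ((0 : EuclideanSpace ℝ (Fin n)), ξ b • e)) +
      ∫ s in Ioc a b, ((b - s) ^ (β - 1) / Real.Gamma β) *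
        L ((traj n a α u y s, u s, s) + ε • (ξ s • e, v s • e, 0)) := by
    intro ε
    rw [bolza, intervalIntegral.integral_of_le hab.le,
      traj_add hα0 hbm hadm y e hv hD ε, ← hξ b hbm]
    congr 1
    · simp
    · refine setIntegral_congr_fun measurableSet_Ioc fun s hs => ?_
      have hs' := Ioc_subset_Icc_self hs
      rw [traj_add hα0 hs' hadm y e hv hD ε, ← hξ s hs']
      simp
  refine Filter.Eventually.of_forall fun ε => ?_
  have := hmin (fun t => u t + ε • (v t • e)) y ⟨?_, ?_⟩
  · have h0 := hB 0
    simp only [zero_smul, add_zero] at h0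
    simp only [Pi.add_apply, ← hB]
    simp only [zero_smul, add_zero]
    exact this
  · have := hadm.1; fun_prop
  · obtain ⟨-, C, hC⟩ := hadm
    refine ⟨C + ‖ε‖ * (D * ‖e‖), ?_⟩
    filter_upwards [hC] with s h hs
    refine (norm_add_le _ _).trans (add_le_add (h hs) ?_)
    rw [norm_smul, norm_smul]
    have := hD s hs
    gcongr
    exact this

noncomputable def gD1 {n : ℕ} (L : EuclideanSpace ℝ (Fin n) × EuclideanSpace ℝ (Fin n) × ℝ → ℝ)
    (p : EuclideanSpace ℝ (Fin n) × EuclideanSpace ℝ (Fin n) × ℝ) : EuclideanSpace ℝ (Fin n) :=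
  (InnerProductSpace.toDual ℝ (EuclideanSpace ℝ (Fin n))).symm ((fderiv ℝ L p).comp
    (ContinuousLinearMap.inl ℝ (EuclideanSpace ℝ (Fin n)) (EuclideanSpace ℝ (Fin n) × ℝ)))

noncomputable def gD2 {n : ℕ} (L : EuclideanSpace ℝ (Fin n) × EuclideanSpace ℝ (Fin n) × ℝ → ℝ)
    (p : EuclideanSpace ℝ (Fin n) × EuclideanSpace ℝ (Fin n) × ℝ) : EuclideanSpace ℝ (Fin n) :=
  (InnerProductSpace.toDual ℝ (EuclideanSpace ℝ (Fin n))).symm ((fderiv ℝ L p).comp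
    ((ContinuousLinearMap.inr ℝ (EuclideanSpace ℝ (Fin n)) (EuclideanSpace ℝ (Fin n) × ℝ)).comp
      (ContinuousLinearMap.inl ℝ (EuclideanSpace ℝ (Fin n)) ℝ)))

section Grad
variable {n : ℕ} {L : EuclideanSpace ℝ (Fin n) × EuclideanSpace ℝ (Fin n) × ℝ → ℝ}

lemma gD1_cont (hL : ContDiff ℝ 2 L) : Continuous (gD1 L) := by
  have := hL.continuous_fderiv (by norm_num)
  unfold gD1
  exact (LinearIsometryEquiv.continuous _).comp (by fun_prop)

lemma gD2_cont (hL : ContDiff ℝ 2 L) : Continuous (gD2 L) := by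
  have := hL.continuous_fderiv (by norm_num)
  unfold gD2
  exact (LinearIsometryEquiv.continuous _).comp (by fun_prop)

lemma grad1 (hL : ContDiff ℝ 2 L) (x u : EuclideanSpace ℝ (Fin n)) (s : ℝ) :
    gradient (fun z => L (z, u, s)) x = gD1 L (x, u, s) := by
  have h := (hL.differentiable (by norm_num) (x, u, s)).hasFDerivAt
  have h2 := HasFDerivAt.comp (g := L) (f := fun z => (z, u, s)) x h
    (hasFDerivAt_prodMk_left (𝕜 := ℝ) x (u, s))
  unfold gradient gD1
  congr 1
  exact h2.fderiv

lemma grad2 (hL : ContDiff ℝ 2 L) (x u : EuclideanSpace ℝ (Fin n)) (s : ℝ) :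
    gradient (fun z => L (x, z, s)) u = gD2 L (x, u, s) := by
  have h := (hL.differentiable (by norm_num) (x, u, s)).hasFDerivAt
  have h2 := HasFDerivAt.comp (g := L) (f := fun z => (x, z, s)) u h
    (HasFDerivAt.comp (g := fun p : EuclideanSpace ℝ (Fin n) × ℝ => (x, p)) (f := fun z => (z, s)) u
      (hasFDerivAt_prodMk_right (𝕜 := ℝ) x (u, s)) (hasFDerivAt_prodMk_left (𝕜 := ℝ) u s))
  unfold gradient gD2
  congr 1
  exact h2.fderiv

lemma fderiv_split (p : EuclideanSpace ℝ (Fin n) × EuclideanSpace ℝ (Fin n) × ℝ)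
    (e : EuclideanSpace ℝ (Fin n)) (r v : ℝ) :
    fderiv ℝ L p (r • e, v • e, 0) = inner ℝ e (r • gD1 L p) + inner ℝ e (v • gD2 L p) := by
  have h : ((r • e, v • e, 0) : EuclideanSpace ℝ (Fin n) × EuclideanSpace ℝ (Fin n) × ℝ) =
      r • (e, 0, 0) + v • (0, e, 0) := by simp
  rw [h, map_add, map_smul, map_smul, inner_smul_right, inner_smul_right, real_inner_comm,
    real_inner_comm (gD2 L p)]
  simp only [gD1, gD2, InnerProductSpace.toDual_symm_apply]
  rfl

end Grad

lemma G_int {n : ℕ} {a b α β : ℝ} (hab : a < b) (hα : 0 < α) (hβ : 0 < β)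
    {g : EuclideanSpace ℝ (Fin n) × EuclideanSpace ℝ (Fin n) × ℝ → EuclideanSpace ℝ (Fin n)}
    (hg : Continuous g) {u : ℝ → EuclideanSpace ℝ (Fin n)}
    (hu : admissible n a b u) (y : EuclideanSpace ℝ (Fin n)) :
    IntegrableOn (fun s => ((b - s) ^ (β - 1) / Real.Gamma β) • g (traj n a α u y s, u s, s))
      (Ioc a b) := by
  obtain ⟨C, hC⟩ := Z_bdd hα hu y
  obtain ⟨M, hM⟩ := (isCompact_closedBall
    (0 : EuclideanSpace ℝ (Fin n) × EuclideanSpace ℝ (Fin n) × ℝ) C).exists_bound_of_continuousOn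
    hg.continuousOn
  refine (w_int hab hβ).smul_bdd M (hg.comp_aestronglyMeasurable (Z_meas hu y)) ?_
  filter_upwards [hC] with s hs
  exact hM _ (by simpa using hs)

lemma first_var_vec (n : ℕ) (a b : ℝ) (hab : a < b)
    (α β : ℝ) (hα0 : 0 < α) (hβ : 0 < β)
    (φ : EuclideanSpace ℝ (Fin n) × EuclideanSpace ℝ (Fin n) → ℝ)
    (L : EuclideanSpace ℝ (Fin n) × EuclideanSpace ℝ (Fin n) × ℝ → ℝ)
    (hφ : ContDiff ℝ 2 φ) (hL : ContDiff ℝ 2 L)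
    (u : ℝ → EuclideanSpace ℝ (Fin n)) (y : EuclideanSpace ℝ (Fin n))
    (hadm : admissible n a b u)
    (hmin : ∀ u' : ℝ → EuclideanSpace ℝ (Fin n), ∀ y' : EuclideanSpace ℝ (Fin n),
      admissible n a b u' → bolza n a b α β φ L u y ≤ bolza n a b α β φ L u' y')
    (G1 G2 : ℝ → EuclideanSpace ℝ (Fin n))
    (hG1 : G1 = fun s => ((b - s) ^ (β - 1) / Real.Gamma β) • gD1 L (traj n a α u y s, u s, s))
    (hG2 : G2 = fun s => ((b - s) ^ (β - 1) / Real.Gamma β) • gD2 L (traj n a α u y s, u s, s)) :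
    ∃ c : EuclideanSpace ℝ (Fin n), ∀ (v ψ : ℝ → ℝ) (C D : ℝ), Measurable v →
      (∀ t ∈ Icc a b, |v t| ≤ D) → Measurable ψ → (∀ t ∈ Ioc a b, |ψ t| ≤ C) →
      (∀ s ∈ Icc a b, ∫ τ in Ioc a b, KK 1 s τ * ψ τ =
        ∫ τ in Ioc a b, KK α s τ * ((Real.Gamma α)⁻¹ * v τ)) →
      (∫ t in Ioc a b, ψ t • (c + ∫ s in Ioc a b, KK 1 s t • G1 s)) +
        (∫ s in Ioc a b, v s • G2 s) = 0 := by
  have iG1 : IntegrableOn G1 (Ioc a b) := hG1 ▸ G_int hab hα0 hβ (gD1_cont hL) hadm y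
  have iG2 : IntegrableOn G2 (Ioc a b) := hG2 ▸ G_int hab hα0 hβ (gD2_cont hL) hadm y
  refine ⟨(InnerProductSpace.toDual ℝ (EuclideanSpace ℝ (Fin n))).symm
    ((fderiv ℝ φ (y, traj n a α u y b)).comp (ContinuousLinearMap.inr ℝ
      (EuclideanSpace ℝ (Fin n)) (EuclideanSpace ℝ (Fin n)))), ?_⟩
  set c := (InnerProductSpace.toDual ℝ (EuclideanSpace ℝ (Fin n))).symm
    ((fderiv ℝ φ (y, traj n a α u y b)).comp (ContinuousLinearMap.inr ℝ
      (EuclideanSpace ℝ (Fin n)) (EuclideanSpace ℝ (Fin n)))) with hc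
  intro v ψ C D hv hD hψ hC hξ
  have hψint : Integrable ψ (volume.restrict (Ioc a b)) := by
    refine Integrable.of_bound hψ.aestronglyMeasurable C ?_
    filter_upwards [ae_restrict_mem measurableSet_Ioc] with t ht using hC t ht
  set ξ : ℝ → ℝ := fun s => ∫ τ in Ioc a b, KK 1 s τ * ψ τ with hξdef
  have hξb : ξ b = ∫ t in Ioc a b, ψ t := by
    refine setIntegral_congr_fun measurableSet_Ioc fun t ht => ?_
    simp [KK, ht.2]
  have iξ : Integrable (fun s => ξ s • G1 s) (volume.restrict (Ioc a b)) := by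
    refine Integrable.bdd_smul (φ := ξ) iG1 ((b - a) ^ (1:ℝ) / 1 * |C|) ?_ ?_
    · exact (KK_apply_meas 1 a b hψ.stronglyMeasurable).aestronglyMeasurable
    · filter_upwards [ae_restrict_mem measurableSet_Ioc] with s hs
      exact KK_apply_bound one_pos (Ioc_subset_Icc_self hs) hC
  have iv : Integrable (fun s => v s • G2 s) (volume.restrict (Ioc a b)) := by
    refine Integrable.bdd_smul iG2 D hv.aestronglyMeasurable ?_
    filter_upwards [ae_restrict_mem measurableSet_Ioc] with s hs
    exact hD s (Ioc_subset_Icc_self hs)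
  have key : ξ b • c + (∫ s in Ioc a b, ξ s • G1 s) + (∫ s in Ioc a b, v s • G2 s) = 0 := by
    apply ext_inner_left ℝ
    intro e
    have h := first_var n a b hab α β hα0 hβ φ L hφ hL u y hadm hmin hv hD hξ e
    rw [inner_zero_right, ← h, inner_add_right, inner_add_right, add_assoc]
    congr 1
    · rw [inner_smul_right, real_inner_comm, hc, InnerProductSpace.toDual_symm_apply]
      have : ((0, ξ b • e) : EuclideanSpace ℝ (Fin n) × EuclideanSpace ℝ (Fin n)) =
        ξ b • (0, e) := by simp
      rw [this, map_smul]
      simp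
    · rw [← integral_inner iξ, ← integral_inner iv,
        ← integral_add (iξ.const_inner e) (iv.const_inner e)]
      congr 1; ext1 s
      rw [fderiv_split, hG1, hG2]
      simp only [inner_smul_right]
      ring
  have sw := fub_swap one_pos hψ hC iG1
  have iR := fub_right_int one_pos iG1
  have iψR : Integrable (fun t => ψ t • ∫ s in Ioc a b, KK 1 s t • G1 s)
      (volume.restrict (Ioc a b)) := by
    refine Integrable.bdd_smul iR C hψ.aestronglyMeasurable ?_
    filter_upwards [ae_restrict_mem measurableSet_Ioc] with s hs
    exact hC s hs
  simp only [smul_add]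
  rw [integral_add (hψint.smul_const c) iψR, integral_smul_const, ← hξb, ← sw]
  exact key

lemma ae_zero_of_test {E : Type*} [NormedAddCommGroup E] [NormedSpace ℝ E] [CompleteSpace E]
    {a b : ℝ} {h : ℝ → E} (hh : Integrable h (volume.restrict (Ioc a b)))
    (H : ∀ ψ : ℝ → ℝ, Measurable ψ → (∀ t, |ψ t| ≤ 1) → ∫ t in Ioc a b, ψ t • h t = 0) :
    ∀ᵐ t ∂(volume.restrict (Ioc a b)), h t = 0 := by
  refine hh.ae_eq_zero_of_forall_setIntegral_eq_zero fun S hS _ => ?_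
  have := H (S.indicator 1) (measurable_one.indicator hS) (fun t => by
    by_cases ht : t ∈ S <;> simp [ht])
  rw [← integral_indicator hS, ← this]
  congr 1; ext t
  by_cases ht : t ∈ S <;> simp [ht]

theorem stmt_6 (n : ℕ) (hn : 1 ≤ n) (a b : ℝ) (hab : a < b)
    (α β : ℝ) (hα0 : 0 < α) (hα1 : α ≤ 1) (hβ : 0 < β)
    (φ : EuclideanSpace ℝ (Fin n) × EuclideanSpace ℝ (Fin n) → ℝ)
    (L : EuclideanSpace ℝ (Fin n) × EuclideanSpace ℝ (Fin n) × ℝ → ℝ)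
    (hφ : ContDiff ℝ 2 φ) (hL : ContDiff ℝ 2 L)
    (u : ℝ → EuclideanSpace ℝ (Fin n)) (y : EuclideanSpace ℝ (Fin n))
    (hadm : admissible n a b u)
    (hmin : ∀ u' : ℝ → EuclideanSpace ℝ (Fin n), ∀ y' : EuclideanSpace ℝ (Fin n),
      admissible n a b u' → bolza n a b α β φ L u y ≤ bolza n a b α β φ L u' y') :
    ∃ q : ℝ → EuclideanSpace ℝ (Fin n),
      IntervalIntegrable (fun s => ((b - s) ^ (β - 1) / Real.Gamma β) •
          gradient (fun z => L (z, u s, s)) (traj n a α u y s)) volume a b ∧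
      (∀ t ∈ Icc a b, q t = q a + ∫ s in a..t,
          ((b - s) ^ (β - 1) / Real.Gamma β) •
            gradient (fun z => L (z, u s, s)) (traj n a α u y s)) ∧
      (α < 1 → ∀ᵐ t ∂(volume.restrict (Icc a b)),
          q t = ∫ s in t..b, (((s - t) ^ (-α) / Real.Gamma (1 - α)) *
              ((b - s) ^ (β - 1) / Real.Gamma β)) •
            gradient (fun z => L (traj n a α u y s, z, s)) (u s)) ∧
      (α = 1 → ∀ᵐ t ∂(volume.restrict (Icc a b)),
          q t = ((b - t) ^ (β - 1) / Real.Gamma β) •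
            gradient (fun z => L (traj n a α u y t, z, t)) (u t)) := by
  simp only [grad1 hL, grad2 hL]
  obtain ⟨c, hc⟩ := first_var_vec n a b hab α β hα0 hβ φ L hφ hL u y hadm hmin _ _ rfl rfl
  have iG1 := G_int hab hα0 hβ (gD1_cont hL) hadm y
  have iG2 := G_int hab hα0 hβ (gD2_cont hL) hadm y
  set G1 : ℝ → EuclideanSpace ℝ (Fin n) := fun s =>
    ((b - s) ^ (β - 1) / Real.Gamma β) • gD1 L (traj n a α u y s, u s, s) with hG1
  have II : IntervalIntegrable G1 volume a b :=
    (intervalIntegrable_iff_integrableOn_Ioc_of_le hab.le).mpr iG1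
  have hsub : ∀ t ∈ Icc a b, ∀ r ∈ Icc a b, IntervalIntegrable G1 volume t r := by
    intro t ht r hr
    refine II.mono_set ?_
    rw [uIcc_of_le hab.le]
    exact uIcc_subset_Icc ht hr
  have ha : a ∈ Icc a b := ⟨le_rfl, hab.le⟩
  have hb : b ∈ Icc a b := ⟨hab.le, le_rfl⟩
  have hone : ∀ t ∈ Ioc a b, ∫ s in Ioc a b, KK 1 s t • G1 s = ∫ s in t..b, G1 s := by
    intro t ht
    rw [← KK_right 1 ht]
    simp
  have iR := fub_right_int one_pos iG1
  have icst : Integrable (fun _ : ℝ => c) (volume.restrict (Ioc a b)) := integrable_const c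
  have iA : Integrable (fun t => c + ∫ s in Ioc a b, KK 1 s t • G1 s)
      (volume.restrict (Ioc a b)) := icst.add iR
  have smul_int : ∀ (ψ : ℝ → ℝ) (f : ℝ → EuclideanSpace ℝ (Fin n)), Measurable ψ →
      (∀ t, |ψ t| ≤ 1) → Integrable f (volume.restrict (Ioc a b)) →
      Integrable (fun t => ψ t • f t) (volume.restrict (Ioc a b)) := by
    intro ψ f hψ h1 hf
    exact Integrable.bdd_smul hf 1 hψ.aestronglyMeasurable (Filter.Eventually.of_forall h1)
  refine ⟨fun t => -(c + ∫ s in t..b, G1 s), II, ?_, ?_, ?_⟩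
  · intro t ht
    simp only
    rw [← intervalIntegral.integral_add_adjacent_intervals (hsub a ha t ht) (hsub t ht b hb)]
    abel
  · intro hlt
    have hγ : 0 < 1 - α := by linarith
    have hΓ : Real.Gamma (1 - α) ≠ 0 := (Real.Gamma_pos_of_pos hγ).ne'
    have hΓα : Real.Gamma α ≠ 0 := (Real.Gamma_pos_of_pos hα0).ne'
    rw [← restrict_Ioc_eq_restrict_Icc]
    have iG2' := iG2.smul (Real.Gamma (1 - α))⁻¹
    have iB := fub_right_int hγ iG2'
    have hz := ae_zero_of_test (iA.add iB) ?_
    · filter_upwards [hz, ae_restrict_mem measurableSet_Ioc] with t h0 ht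
      simp only [Pi.add_apply] at h0
      rw [hone t ht] at h0
      rw [eq_comm, eq_neg_iff_add_eq_zero, add_comm, ← h0, ← KK_right (1 - α) ht]
      congr 2; ext1 s
      simp only [Pi.smul_apply, smul_smul]
      congr 1
      rw [show (1 - α - 1) = -α by ring]
      ring
    · intro ψ hψ h1
      have hh := hc (fun s => (Real.Gamma (1 - α))⁻¹ * ∫ r in Ioc a b, KK (1 - α) s r * ψ r) ψ 1
        ((Real.Gamma (1 - α))⁻¹ * ((b - a) ^ (1 - α) / (1 - α) * |1|))
        ((KK_apply_meas (1 - α) a b hψ.stronglyMeasurable).measurable.const_mul _) ?_ hψ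
        (fun t _ => h1 t) ?_
      · simp only [Pi.add_apply]
        simp only [smul_add _ (c + _) _]
        rw [integral_add (smul_int ψ _ hψ h1 iA) (smul_int ψ _ hψ h1 iB),
          ← fub_swap hγ hψ (fun t _ => h1 t) iG2', ← hh]
        congr 2; ext1 s
        simp only [Pi.smul_apply, smul_smul]
        congr 1
        ring
      · intro s hs
        rw [abs_mul, abs_of_pos (inv_pos.mpr (Real.Gamma_pos_of_pos hγ))]
        refine mul_le_mul_of_nonneg_left ?_ (inv_pos.mpr (Real.Gamma_pos_of_pos hγ)).le
        exact KK_apply_bound hγ hs (fun t _ => h1 t)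
      · intro s hs
        have sg := semigroup hα0 hlt hs hψ (C := 1) (fun t _ => h1 t)
        have : ∀ τ, KK α s τ * ((Real.Gamma α)⁻¹ * ((Real.Gamma (1 - α))⁻¹ *
            ∫ r in Ioc a b, KK (1 - α) τ r * ψ r)) =
            ((Real.Gamma α)⁻¹ * (Real.Gamma (1 - α))⁻¹) *
            (KK α s τ * ∫ r in Ioc a b, KK (1 - α) τ r * ψ r) := fun τ => by ring
        simp only [this]
        rw [integral_const_mul, sg]
        field_simp
  · intro h1α
    rw [← restrict_Ioc_eq_restrict_Icc]
    have hz := ae_zero_of_test (iA.add iG2) ?_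
    · filter_upwards [hz, ae_restrict_mem measurableSet_Ioc] with t h0 ht
      simp only [Pi.add_apply] at h0
      rw [hone t ht] at h0
      rw [eq_comm, eq_neg_iff_add_eq_zero, add_comm, ← h0]
    · intro ψ hψ h1
      have hh := hc ψ ψ 1 1 hψ (fun t _ => h1 t) hψ (fun t _ => h1 t) (by
        intro s hs; simp [h1α])
      simp only [Pi.add_apply]
      simp only [smul_add _ (c + _) _]
      rw [integral_add (smul_int ψ _ hψ h1 iA) (smul_int ψ _ hψ h1 iG2)]
      exact hh
end
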